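/- There exists C > 0, depending only on φ, such that for every admissible finite collection 𝓘 = {[a_m,b_m]}_{m=1}^N and every locally integrable f : ℝ → ℂ with finite BMO seminorm ‖f‖_* = sup_J (1/|J|) ∫_J |f − f_J| (the supremum over all bounded intervals J, f_J denoting the average of f over J), the rotated family g_m(x) = e^{−2πi a_m x}(f∗φ_m)(x) satisfies sup_J (1/|J|) ∫_J ( Σ_{m=1}^N |g_m(x) − (g_m)_J|² )^{1/2} dx ≤ C ‖f‖_*. (Uniform boundedness of the rotated family from BMO to BMO(ℓ²), i.e. on Ḟ^0_{∞2}.) -/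

import Mathlib

open MeasureTheory Real Set Function
open scoped FourierTransform ENNReal NNReal

/-- `e2pi t = e^{2πit}`. -/
noncomputable def e2pi (t : ℝ) : ℂ := Complex.exp (2 * (Real.pi : ℂ) * Complex.I * (t : ℂ))

/-- Convolution of two functions on `ℝ`. -/
noncomputable def conv (f g : ℝ → ℂ) (x : ℝ) : ℂ := ∫ t, f t * g (x - t)

/-- The function `φ_m` associated with the interval `[a,b]`: its Fourier transform is
`ξ ↦ 𝓕φ ((ξ - a)/(b - a))`; in space variables it is `x ↦ (b-a) e^{2πiax} φ((b-a)x)`. -/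
noncomputable def phim (φ : ℝ → ℂ) (a b : ℝ) (x : ℝ) : ℂ :=
  ((b - a : ℝ) : ℂ) * e2pi (a * x) * φ ((b - a) * x)

/-- A finite collection of compact intervals `[a m, b m]` is admissible if the intervals are
nondegenerate, pairwise disjoint, and none of them contains `0` in its interior. -/
def Admissible {N : ℕ} (a b : Fin N → ℝ) : Prop :=
  (∀ m, a m < b m) ∧ (∀ m, (0 : ℝ) ∉ Set.Ioo (a m) (b m)) ∧
    ∀ m m', m ≠ m' → Disjoint (Set.Icc (a m) (b m)) (Set.Icc (a m') (b m'))

/-- The rotated Rubio de Francia piece `g_m(x) = e^{-2πi a x} (f ∗ φ_m)(x)`. -/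
noncomputable def rotConv (φ : ℝ → ℂ) (a b : ℝ) (f : ℝ → ℂ) (x : ℝ) : ℂ :=
  e2pi (-(a * x)) * conv f (phim φ a b) x

theorem aux_plancherel {f : ℝ → ℂ} (h1 : Integrable f) (h2 : MemLp f 2) :
    ∫⁻ ξ, ‖𝓕 f ξ‖ₑ ^ 2 = ∫⁻ x, ‖f x‖ₑ ^ 2 := by
  set F : Lp ℂ 2 (volume : Measure ℝ) := h2.toLp f with hF
  have key : ∀ᵐ x, (𝓕 F : Lp ℂ 2 (volume : Measure ℝ)) x = 𝓕 f x := by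
    have hc : Continuous (𝓕 f) :=
      VectorFourier.fourierIntegral_continuous Real.continuous_fourierChar
        (by exact continuous_inner) h1
    refine ae_eq_of_integral_contDiff_smul_eq ?_ hc.locallyIntegrable ?_
    · exact (Lp.memLp _).locallyIntegrable (by norm_num)
    · intro g hg hgs
      let G : SchwartzMap ℝ ℂ := HasCompactSupport.toSchwartzMap (f := fun x => (g x : ℂ))
        (hgs.comp_left (g := fun r : ℝ => (r : ℂ)) (by simp)) (Complex.ofRealCLM.contDiff.comp hg)
      have e1 := congrArg (fun T => T G) (Lp.fourier_toTemperedDistribution_eq F)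
      simp only [TemperedDistribution.fourier_apply, Lp.toTemperedDistribution_apply] at e1
      have hG : ∀ x, G x = (g x : ℂ) := fun x => rfl
      have e2 : ∫ x, g x • (𝓕 F : Lp ℂ 2 (volume : Measure ℝ)) x = ∫ x, G x • (𝓕 F : Lp ℂ 2 (volume : Measure ℝ)) x := by
        simp [hG]
      have e3 : ∫ x, g x • 𝓕 f x = ∫ x, 𝓕 f x • G x := by
        simp [hG, mul_comm]
      rw [e2, ← e1, e3]
      have := VectorFourier.integral_fourierIntegral_smul_eq_flip (μ := volume) (ν := volume)
        (L := innerₗ ℝ) Real.continuous_fourierChar (by exact continuous_inner) h1 G.integrable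
      have e4 : ∫ x, 𝓕 f x • G x = ∫ x, f x • (𝓕 G : SchwartzMap ℝ ℂ) x := by
        refine this.trans ?_
        simp only [flip_innerₗ]
        rfl
      rw [e4]
      refine integral_congr_ae ?_
      filter_upwards [h2.coeFn_toLp] with x hx
      rw [hF, hx, smul_eq_mul, smul_eq_mul, mul_comm]
  have n := Lp.norm_fourier_eq F
  have a1 : eLpNorm (𝓕 F : Lp ℂ 2 (volume : Measure ℝ)) 2 volume = eLpNorm F 2 volume := by
    rw [← Lp.enorm_def, ← Lp.enorm_def, ← ofReal_norm, ← ofReal_norm, n]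
  rw [eLpNorm_congr_ae key, eLpNorm_congr_ae h2.coeFn_toLp] at a1
  simp only [eLpNorm_eq_lintegral_rpow_enorm_toReal (p := 2) (by norm_num) (by norm_num)] at a1
  have := congrArg (fun x : ℝ≥0∞ => x ^ (2:ℝ)) a1
  simp only [← ENNReal.rpow_mul] at this
  norm_num at this
  exact this

/-- pointwise Gallagher inequality -/
theorem aux_gallagher {F F' : ℝ → ℂ} (hF : ∀ x, HasDerivAt F (F' x) x) (hc : Continuous F')
    (a δ : ℝ) (hδ : 0 < δ) :
    ‖F a‖ₑ ^ 2 ≤ ENNReal.ofReal (2 / δ) * (∫⁻ ξ in Ioc a (a + δ), ‖F ξ‖ₑ ^ 2)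
      + ENNReal.ofReal (2 * δ) * ∫⁻ ξ in Ioc a (a + δ), ‖F' ξ‖ₑ ^ 2 := by
  have hFc : Continuous F := continuous_iff_continuousAt.2 fun x => (hF x).continuousAt
  have CS : ∀ ξ ∈ Ioc a (a+δ), ‖F a‖ ^ 2 ≤ 2 * ‖F ξ‖ ^ 2 + 2 * δ * ∫ s in Ioc a (a+δ), ‖F' s‖ ^ 2 := by
    intro ξ hξ
    have e : F ξ - F a = ∫ s in a..ξ, F' s := by
      rw [intervalIntegral.integral_eq_sub_of_hasDerivAt (fun x _ => hF x)
        (hc.intervalIntegrable _ _)]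
    have n1 : ‖F ξ - F a‖ ≤ ∫ s in Ioc a (a+δ), ‖F' s‖ := by
      rw [e]
      refine (intervalIntegral.norm_integral_le_integral_norm hξ.1.le).trans ?_
      rw [intervalIntegral.integral_of_le hξ.1.le]
      refine setIntegral_mono_set ?_ (Filter.Eventually.of_forall fun _ => norm_nonneg _)
        (Ioc_subset_Ioc_right hξ.2).eventuallyLE
      exact (hc.norm.integrableOn_Icc (a := a) (b := a + δ)).mono_set Ioc_subset_Icc_self
    have n2 : (∫ s in Ioc a (a+δ), ‖F' s‖) ^ 2 ≤ δ * ∫ s in Ioc a (a+δ), ‖F' s‖ ^ 2 := by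
      set I := ∫ s in Ioc a (a+δ), ‖F' s‖ with hI
      have i1 : IntegrableOn (fun s => ‖F' s‖) (Ioc a (a+δ)) :=
        (hc.norm.integrableOn_Icc (a := a) (b := a + δ)).mono_set Ioc_subset_Icc_self
      have i2 : IntegrableOn (fun s => ‖F' s‖ ^ 2) (Ioc a (a+δ)) :=
        ((hc.norm.pow 2).integrableOn_Icc (a := a) (b := a + δ)).mono_set Ioc_subset_Icc_self
      have h0 : 0 ≤ ∫ s in Ioc a (a+δ), (‖F' s‖ ^ 2 - 2 * (I/δ) * ‖F' s‖ + (I/δ)^2) :=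
        integral_nonneg fun s => by
          have := sq_nonneg (‖F' s‖ - I/δ)
          simp only [Pi.zero_apply]; nlinarith
      have i3 : IntegrableOn (fun s => ‖F' s‖ ^ 2 - 2 * (I/δ) * ‖F' s‖) (Ioc a (a+δ)) :=
        i2.sub (i1.const_mul _)
      rw [integral_add i3 (integrable_const _),
        integral_sub i2 (i1.const_mul _), integral_const_mul, ← hI] at h0
      simp [hδ.le] at h0
      have : 2 * (I/δ) * I = 2 * I^2/δ := by ring
      have h3 : δ * (I/δ)^2 = I^2/δ := by field_simp
      rw [this, h3] at h0
      have h4 : I^2/δ ≤ ∫ s in Ioc a (a+δ), ‖F' s‖ ^ 2 := by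
        have : 2 * I^2/δ = I^2/δ + I^2/δ := by ring
        linarith
      rw [div_le_iff₀ hδ] at h4
      linarith
    have n3 : ‖F a‖ ≤ ‖F ξ‖ + ‖F ξ - F a‖ := by
      have := norm_sub_le (F ξ) (F ξ - F a)
      simpa using this
    have n4 : ‖F ξ - F a‖ ^2 ≤ δ * ∫ s in Ioc a (a+δ), ‖F' s‖ ^ 2 :=
      (pow_le_pow_left₀ (norm_nonneg _) n1 2).trans n2
    have : ‖F a‖ ^ 2 ≤ (‖F ξ‖ + ‖F ξ - F a‖)^2 := pow_le_pow_left₀ (norm_nonneg _) n3 2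
    nlinarith [sq_nonneg (‖F ξ‖ - ‖F ξ - F a‖)]
  have i1 : IntegrableOn (fun s => ‖F s‖ ^ 2) (Ioc a (a+δ)) :=
    ((hFc.norm.pow 2).integrableOn_Icc (a := a) (b := a + δ)).mono_set Ioc_subset_Icc_self
  have i2 : IntegrableOn (fun s => ‖F' s‖ ^ 2) (Ioc a (a+δ)) :=
    ((hc.norm.pow 2).integrableOn_Icc (a := a) (b := a + δ)).mono_set Ioc_subset_Icc_self
  have R : ‖F a‖ ^ 2 ≤ 2 / δ * (∫ s in Ioc a (a+δ), ‖F s‖ ^ 2)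
      + 2 * δ * ∫ s in Ioc a (a+δ), ‖F' s‖ ^ 2 := by
    have := setIntegral_mono_on (μ := volume) (integrable_const (‖F a‖^2))
      ((i1.const_mul 2).add (integrable_const (2 * δ * ∫ s in Ioc a (a+δ), ‖F' s‖ ^ 2)))
      measurableSet_Ioc CS
    simp only [Pi.add_apply] at this
    rw [integral_add (i1.const_mul 2) (integrable_const _), integral_const_mul] at this
    simp [hδ.le] at this
    have h := mul_le_mul_of_nonneg_left this (inv_nonneg.2 hδ.le)
    rw [mul_add, inv_mul_cancel_left₀ hδ.ne', inv_mul_cancel_left₀ hδ.ne'] at h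
    calc _ ≤ _ := h
      _ = _ := by ring
  have c1 : ∀ G : ℝ → ℂ, IntegrableOn (fun s => ‖G s‖ ^ 2) (Ioc a (a+δ)) →
      ∫⁻ ξ in Ioc a (a + δ), ‖G ξ‖ₑ ^ 2 = ENNReal.ofReal (∫ s in Ioc a (a+δ), ‖G s‖ ^ 2) := by
    intro G hG
    rw [ofReal_integral_eq_lintegral_ofReal hG (Filter.Eventually.of_forall fun _ => by positivity)]
    congr with x
    rw [ENNReal.ofReal_pow (norm_nonneg _), ofReal_norm]
  rw [c1 F i1, c1 F' i2, ← ENNReal.ofReal_mul (by positivity), ← ENNReal.ofReal_mul (by positivity),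
    ← ENNReal.ofReal_add (by positivity) (by positivity), ← ofReal_norm,
    ← ENNReal.ofReal_pow (norm_nonneg _)]
  exact ENNReal.ofReal_le_ofReal R

theorem aux_sieve {ι : Type*} (S : Finset ι) (a : ι → ℝ) (δ : ℝ) (hδ : 0 < δ)
    (hd : ∀ m ∈ S, ∀ m' ∈ S, m ≠ m' → Disjoint (Ioc (a m) (a m + δ)) (Ioc (a m') (a m' + δ)))
    {h : ℝ → ℂ} (h1 : Integrable h) (h2 : MemLp h 2)
    (h3 : Integrable (fun t : ℝ => (t:ℂ) * h t)) (h4 : MemLp (fun t : ℝ => (t:ℂ) * h t) 2) :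
    ∑ m ∈ S, ‖𝓕 h (a m)‖ₑ ^ 2 ≤
      ∫⁻ t, ENNReal.ofReal (2 / δ + 8 * π ^ 2 * δ * t ^ 2) * ‖h t‖ₑ ^ 2 := by
  set h' : ℝ → ℂ := fun t => (-2 * π * Complex.I * t) • h t with hh'
  have e : h' = fun t : ℝ => (-2 * π * Complex.I) * ((t:ℂ) * h t) := by
    ext t; simp [hh']; ring
  have i' : Integrable h' := by rw [e]; exact h3.const_mul _
  have l' : MemLp h' 2 := by rw [e]; exact h4.const_mul _
  have D : ∀ ξ, HasDerivAt (𝓕 h) (𝓕 h' ξ) ξ := fun ξ =>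
    Real.hasDerivAt_fourier h1 (by simpa using h3) ξ
  have hc' : Continuous (𝓕 h') :=
      VectorFourier.fourierIntegral_continuous Real.continuous_fourierChar
        (by exact continuous_inner) i'
  have U : ∀ G : ℝ → ℝ≥0∞, ∑ m ∈ S, ∫⁻ ξ in Ioc (a m) (a m + δ), G ξ ≤ ∫⁻ ξ, G ξ := by
    intro G
    rw [← lintegral_biUnion_finset (fun m hm m' hm' hne => hd m hm m' hm' hne)
      (fun _ _ => measurableSet_Ioc)]
    exact setLIntegral_le_lintegral _ _
  calc _ ≤ ∑ m ∈ S, (ENNReal.ofReal (2 / δ) * (∫⁻ ξ in Ioc (a m) (a m + δ), ‖𝓕 h ξ‖ₑ ^ 2)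
      + ENNReal.ofReal (2 * δ) * ∫⁻ ξ in Ioc (a m) (a m + δ), ‖𝓕 h' ξ‖ₑ ^ 2) :=
        Finset.sum_le_sum fun m _ => aux_gallagher D hc' _ _ hδ
    _ ≤ ENNReal.ofReal (2 / δ) * (∫⁻ ξ, ‖𝓕 h ξ‖ₑ ^ 2)
      + ENNReal.ofReal (2 * δ) * ∫⁻ ξ, ‖𝓕 h' ξ‖ₑ ^ 2 := by
        rw [Finset.sum_add_distrib, ← Finset.mul_sum, ← Finset.mul_sum]
        gcongr <;> apply U
    _ = ENNReal.ofReal (2 / δ) * (∫⁻ t, ‖h t‖ₑ ^ 2)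
      + ENNReal.ofReal (2 * δ) * ∫⁻ t, ‖h' t‖ₑ ^ 2 := by
        rw [aux_plancherel h1 h2, aux_plancherel i' l']
    _ = ∫⁻ t, (ENNReal.ofReal (2 / δ) * ‖h t‖ₑ ^ 2
      + ENNReal.ofReal (2 * δ) * ‖h' t‖ₑ ^ 2) := by
        rw [lintegral_add_left' ((h1.aestronglyMeasurable.enorm.pow_const 2).const_mul _),
          lintegral_const_mul' _ _ ENNReal.ofReal_ne_top, lintegral_const_mul' _ _ ENNReal.ofReal_ne_top]
    _ = _ := by
        congr with t
        have : ‖h' t‖ₑ ^ 2 = ENNReal.ofReal (4 * π^2 * t^2) * ‖h t‖ₑ ^ 2 := by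
          rw [hh']
          simp only [smul_eq_mul, enorm_mul, mul_pow]
          congr 1
          rw [← ofReal_norm, ← ofReal_norm, ← ofReal_norm, ← ofReal_norm]
          simp only [← ENNReal.ofReal_pow (norm_nonneg _)]
          repeat rw [← ENNReal.ofReal_mul (by positivity)]
          simp
          norm_num
        rw [this, ← mul_assoc, ← ENNReal.ofReal_mul (by positivity), ← add_mul,
          ← ENNReal.ofReal_add (by positivity) (by positivity)]
        congr 2
        ring

/-- interval average -/
noncomputable def auxAv (f : ℝ → ℂ) (u v : ℝ) : ℂ := (v - u)⁻¹ • ∫ r in u..v, f r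

theorem auxAv_sub_le {f : ℝ → ℂ} (hf : LocallyIntegrable f) {u v : ℝ} (huv : u < v) (c : ℂ) :
    ‖auxAv f u v - c‖ ≤ (v - u)⁻¹ * ∫ r in u..v, ‖f r - c‖ := by
  have hi : IntervalIntegrable f volume u v :=
    (hf.integrableOn_isCompact isCompact_uIcc).intervalIntegrable
  have e : auxAv f u v - c = (v - u)⁻¹ • ∫ r in u..v, (f r - c) := by
    rw [auxAv, intervalIntegral.integral_sub hi (by simp), intervalIntegral.integral_const,
      smul_sub, smul_smul, inv_mul_cancel₀ (by linarith), one_smul]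
  rw [e, norm_smul, Real.norm_of_nonneg (inv_nonneg.2 (by linarith))]
  gcongr
  exact intervalIntegral.norm_integral_le_integral_norm huv.le

theorem aux_ii {f : ℝ → ℂ} (hf : LocallyIntegrable f) (u v : ℝ) (c : ℂ) :
    IntervalIntegrable (fun r => ‖f r - c‖) volume u v := by
  have hi : IntervalIntegrable f volume u v :=
    (hf.integrableOn_isCompact isCompact_uIcc).intervalIntegrable
  exact (hi.sub (by simp)).norm

/-- sub-interval average estimate -/
theorem auxAv_sub_le' {f : ℝ → ℂ} (hf : LocallyIntegrable f) {u v u' v' : ℝ} (huv : u < v)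
    (h1 : u ≤ u') (h2 : v' ≤ v) (h3 : (v - u) = 2 * (v' - u')) (c : ℂ) :
    ‖auxAv f u' v' - c‖ ≤ 2 * ((v - u)⁻¹ * ∫ r in u..v, ‖f r - c‖) := by
  have h4 : u' < v' := by linarith
  refine (auxAv_sub_le hf h4 c).trans ?_
  have : ∫ r in u'..v', ‖f r - c‖ ≤ ∫ r in u..v, ‖f r - c‖ :=
    intervalIntegral.integral_mono_interval h1 h4.le h2
      (Filter.Eventually.of_forall fun _ => norm_nonneg _) (aux_ii hf _ _ _)
  have e : (v' - u')⁻¹ = 2 * (v - u)⁻¹ := by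
    rw [h3, mul_inv]; ring
  rw [e, mul_assoc]
  have : 0 ≤ (v-u)⁻¹ := inv_nonneg.2 (by linarith)
  gcongr

noncomputable def auxV (f : ℝ → ℂ) : ℕ → ℝ → ℝ → ℂ → ℝ
  | 0, u, v, c => (v - u) * ‖auxAv f u v - c‖ ^ 2
  | n + 1, u, v, c => auxV f n u ((u + v) / 2) c + auxV f n ((u + v) / 2) v c

theorem auxV_nonneg (f : ℝ → ℂ) (n : ℕ) : ∀ {u v : ℝ}, u < v → ∀ c, 0 ≤ auxV f n u v c := by
  induction n with
  | zero => intro u v huv c; simp only [auxV]; have := sub_pos.2 huv; positivity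
  | succ n ih =>
    intro u v huv c
    exact add_nonneg (ih (by linarith) c) (ih (by linarith) c)

theorem auxV_change (f : ℝ → ℂ) (c c' : ℂ) (n : ℕ) : ∀ {u v : ℝ}, u < v →
    auxV f n u v c ≤ 2 * auxV f n u v c' + 2 * (v - u) * ‖c' - c‖ ^ 2 := by
  induction n with
  | zero =>
    intro u v huv
    simp only [auxV]
    have h := sub_pos.2 huv
    have : ‖auxAv f u v - c‖ ≤ ‖auxAv f u v - c'‖ + ‖c' - c‖ := norm_sub_le_norm_sub_add_norm_sub ..
    have : ‖auxAv f u v - c‖ ^ 2 ≤ (‖auxAv f u v - c'‖ + ‖c' - c‖) ^ 2 :=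
      pow_le_pow_left₀ (norm_nonneg _) this 2
    have : ‖auxAv f u v - c‖ ^ 2 ≤ 2 * ‖auxAv f u v - c'‖ ^ 2 + 2 * ‖c' - c‖ ^ 2 := by
      nlinarith [sq_nonneg (‖auxAv f u v - c'‖ - ‖c' - c‖)]
    nlinarith
  | succ n ih =>
    intro u v huv
    have a := ih (u := u) (v := (u+v)/2) (by linarith)
    have b := ih (u := (u+v)/2) (v := v) (by linarith)
    simp only [auxV]
    nlinarith

theorem auxV_Q {f : ℝ → ℂ} (hf : LocallyIntegrable f) {K : ℝ} (hK : 0 < K) (n : ℕ)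
    (R : ∀ k ≤ n, ∀ u v, u < v → auxV f k u v (auxAv f u v) ≤ 176 * K ^ 2 * (v - u)) :
    ∀ u v, u < v → ∀ c, ‖auxAv f u v - c‖ ≤ 8 * K →
      auxV f n u v c ≤ 16 * K ^ 2 * (v - u) + 120 * K * ∫ r in u..v, ‖f r - c‖ := by
  induction n with
  | zero =>
    intro u v huv c hc
    have hp := sub_pos.2 huv
    simp only [auxV]
    have h1 := auxAv_sub_le hf huv c
    set I := ∫ r in u..v, ‖f r - c‖
    have hI : 0 ≤ I := intervalIntegral.integral_nonneg huv.le fun _ _ => norm_nonneg _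
    have h2 : (v - u) * ‖auxAv f u v - c‖ ≤ I := by
      calc _ ≤ (v - u) * ((v - u)⁻¹ * I) := by gcongr
        _ = I := by field_simp
    have h3 : (v - u) * ‖auxAv f u v - c‖ ^ 2 ≤ 8 * K * I := by
      calc _ = ‖auxAv f u v - c‖ * ((v - u) * ‖auxAv f u v - c‖) := by ring
        _ ≤ 8 * K * I := by gcongr
    have : 0 ≤ 16 * K ^ 2 * (v - u) := by positivity
    nlinarith [mul_nonneg hK.le hI]
  | succ n ih =>
    intro u v huv c hc
    have hp := sub_pos.2 huv
    set I := ∫ r in u..v, ‖f r - c‖ with hI'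
    have hI : 0 ≤ I := intervalIntegral.integral_nonneg huv.le fun _ _ => norm_nonneg _
    by_cases hcase : 4 * K * (v - u) < I
    · have h1 := auxV_change f c (auxAv f u v) (n+1) huv
      have h2 := R (n+1) le_rfl u v huv
      have h3 : ‖auxAv f u v - c‖ ^ 2 ≤ (8 * K) ^ 2 := pow_le_pow_left₀ (norm_nonneg _) hc 2
      have h4 : 2 * (v - u) * ‖auxAv f u v - c‖ ^ 2 ≤ 2 * (v - u) * (8 * K) ^ 2 := by gcongr
      have h5 : 120 * K * (4 * K * (v-u)) ≤ 120 * K * I := by gcongr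
      nlinarith [mul_pos (pow_pos hK 2) hp]
    · push Not at hcase
      have ih' := ih (fun k hk => R k (by omega))
      have hav : (v - u)⁻¹ * I ≤ 4 * K := by
        rw [inv_mul_le_iff₀ hp]; linarith
      have a := ih' u ((u+v)/2) (by linarith) c
        ((auxAv_sub_le' hf huv le_rfl (by linarith) (by ring) c).trans (by linarith))
      have b := ih' ((u+v)/2) v (by linarith) c
        ((auxAv_sub_le' hf huv (by linarith) le_rfl (by ring) c).trans (by linarith))
      have e := intervalIntegral.integral_add_adjacent_intervals
        (aux_ii hf u ((u+v)/2) c) (aux_ii hf ((u+v)/2) v c)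
      simp only [auxV]
      rw [hI', ← e]
      linarith

theorem auxV_R {f : ℝ → ℂ} (hf : LocallyIntegrable f) {K : ℝ} (hK : 0 < K)
    (hb : ∀ u v, u < v → (v - u)⁻¹ * ∫ r in u..v, ‖f r - auxAv f u v‖ ≤ K) (n : ℕ) :
    ∀ u v, u < v → auxV f n u v (auxAv f u v) ≤ 176 * K ^ 2 * (v - u) := by
  induction n using Nat.strong_induction_on with
  | _ n ih =>
    intro u v huv
    have hp := sub_pos.2 huv
    cases n with
    | zero => simp [auxV]; positivity
    | succ n =>
      have Q := auxV_Q hf hK n (fun k hk => ih k (by omega))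
      set c := auxAv f u v with hc
      have hav := hb u v huv
      rw [← hc] at hav
      have a := Q u ((u+v)/2) (by linarith) c
        ((auxAv_sub_le' hf huv le_rfl (by linarith) (by ring) c).trans (by linarith))
      have b := Q ((u+v)/2) v (by linarith) c
        ((auxAv_sub_le' hf huv (by linarith) le_rfl (by ring) c).trans (by linarith))
      have e := intervalIntegral.integral_add_adjacent_intervals
        (aux_ii hf u ((u+v)/2) c) (aux_ii hf ((u+v)/2) v c)
      rw [inv_mul_le_iff₀ hp, ← e] at hav
      simp only [auxV]
      have := mul_le_mul_of_nonneg_left hav (by positivity : 0 ≤ 120 * K)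
      nlinarith [mul_pos (pow_pos hK 2) hp]

noncomputable def auxE (f : ℝ → ℂ) : ℕ → ℝ → ℝ → ℝ → ℂ
  | 0, u, v, _ => auxAv f u v
  | n + 1, u, v, x => if x ≤ (u + v) / 2 then auxE f n u ((u + v) / 2) x
      else auxE f n ((u + v) / 2) v x

theorem auxE_meas (f : ℝ → ℂ) (n : ℕ) : ∀ u v, Measurable (auxE f n u v) := by
  induction n with
  | zero => intro u v; exact measurable_const
  | succ n ih =>
    intro u v
    exact Measurable.ite measurableSet_Iic (ih _ _) (ih _ _)

theorem auxE_int (f : ℝ → ℂ) (c : ℂ) (n : ℕ) : ∀ u v, u < v →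
    ∫⁻ x in Ioc u v, ‖auxE f n u v x - c‖ₑ ^ 2 = ENNReal.ofReal (auxV f n u v c) := by
  induction n with
  | zero =>
    intro u v huv
    simp only [auxE, auxV, lintegral_const, Measure.restrict_apply_univ, Real.volume_Ioc]
    rw [ENNReal.ofReal_mul (by linarith), mul_comm, ENNReal.ofReal_pow (norm_nonneg _), ofReal_norm]
  | succ n ih =>
    intro u v huv
    have e : Ioc u v = Ioc u ((u+v)/2) ∪ Ioc ((u+v)/2) v :=
      (Ioc_union_Ioc_eq_Ioc (by linarith) (by linarith)).symm
    rw [e, lintegral_union measurableSet_Ioc (Ioc_disjoint_Ioc_of_le le_rfl)]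
    simp only [auxV]
    rw [ENNReal.ofReal_add (auxV_nonneg f n (by linarith) c) (auxV_nonneg f n (by linarith) c),
      ← ih _ _ (by linarith), ← ih _ _ (by linarith)]
    congr 1
    · refine setLIntegral_congr_fun measurableSet_Ioc fun x hx => ?_
      simp [auxE, hx.2]
    · refine setLIntegral_congr_fun measurableSet_Ioc fun x hx => ?_
      simp [auxE, not_le.2 hx.1]

theorem auxE_eq (f : ℝ → ℂ) (n : ℕ) : ∀ u v x, x ∈ Ioc u v → ∃ w,
    x ∈ Metric.closedBall w (1 * ((v - u) / 2 / 2 ^ n)) ∧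
    auxE f n u v x = auxAv f (w - (v - u) / 2 / 2 ^ n) (w + (v - u) / 2 / 2 ^ n) := by
  induction n with
  | zero =>
    intro u v x hx
    refine ⟨(u+v)/2, ?_, ?_⟩
    · rw [Real.closedBall_eq_Icc]; constructor <;> [skip; skip] <;> simp <;> linarith [hx.1, hx.2]
    · simp only [auxE]; congr 1 <;> simp <;> ring
  | succ n ih =>
    intro u v x hx
    by_cases h : x ≤ (u+v)/2
    · obtain ⟨w, h1, h2⟩ := ih u ((u+v)/2) x ⟨hx.1, h⟩
      have e : ((u+v)/2 - u)/2/2^n = (v-u)/2/2^(n+1) := by field_simp; ring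
      rw [e] at h1 h2
      exact ⟨w, h1, by simpa [auxE, h] using h2⟩
    · obtain ⟨w, h1, h2⟩ := ih ((u+v)/2) v x ⟨not_le.1 h, hx.2⟩
      have e : (v - (u+v)/2)/2/2^n = (v-u)/2/2^(n+1) := by field_simp; ring
      rw [e] at h1 h2
      exact ⟨w, h1, by simpa [auxE, h] using h2⟩

theorem aux_JN {f : ℝ → ℂ} (hf : LocallyIntegrable f) {K : ℝ} (hK0 : 0 ≤ K)
    (hb : ∀ u v, u < v → (v - u)⁻¹ * ∫ r in u..v, ‖f r - auxAv f u v‖ ≤ K) {u v : ℝ}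
    (huv : u < v) :
    ∫⁻ x in Ioc u v, ‖f x - auxAv f u v‖ₑ ^ 2 ≤ ENNReal.ofReal (176 * K ^ 2 * (v - u)) := by
  have hp := sub_pos.2 huv
  set c := auxAv f u v with hc
  have conv : ∀ᵐ x, x ∈ Ioc u v → Filter.Tendsto (fun n => auxE f n u v x) Filter.atTop (nhds (f x)) := by
    filter_upwards [IsUnifLocDoublingMeasure.ae_tendsto_average volume hf 1] with x hx hxI
    choose w h1 h2 using fun n => auxE_eq f n u v x hxI
    have ht : Filter.Tendsto (fun n : ℕ => (v - u) / 2 / 2 ^ n) Filter.atTop (nhdsWithin 0 (Ioi 0)) := by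
      rw [tendsto_nhdsWithin_iff]
      refine ⟨?_, Filter.Eventually.of_forall fun n => by simp only [mem_Ioi]; positivity⟩
      have := (tendsto_pow_atTop_nhds_zero_of_lt_one (r := (1/2 : ℝ)) (by norm_num) (by norm_num)).const_mul
        ((v-u)/2)
      simpa [div_eq_mul_inv] using this
    have := hx w _ ht (Filter.Eventually.of_forall h1)
    refine this.congr fun n => ?_
    rw [h2 n, auxAv]
    have hr : 0 < (v - u) / 2 / 2 ^ n := by positivity
    rw [setAverage_eq, Real.closedBall_eq_Icc, integral_Icc_eq_integral_Ioc,
      ← intervalIntegral.integral_of_le (by linarith)]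
    congr 2
    simp only [measureReal_def, Real.volume_Icc]
    rw [ENNReal.toReal_ofReal (by linarith)]
  have main : ∀ K' > K, ∫⁻ x in Ioc u v, ‖f x - c‖ₑ ^ 2 ≤ ENNReal.ofReal (176 * K' ^ 2 * (v - u)) := by
    intro K' hK'
    have R := fun n => auxV_R hf (K := K') (by linarith) (fun u v h => (hb u v h).trans hK'.le) n u v huv
    calc ∫⁻ x in Ioc u v, ‖f x - c‖ₑ ^ 2
        ≤ ∫⁻ x in Ioc u v, Filter.liminf (fun n => ‖auxE f n u v x - c‖ₑ ^ 2) Filter.atTop := by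
          refine lintegral_mono_ae ?_
          rw [ae_restrict_iff' measurableSet_Ioc]
          filter_upwards [conv] with x hx hxI
          have := ((ENNReal.continuous_pow 2).tendsto _).comp ((hx hxI).sub_const c).enorm
          exact this.liminf_eq.ge
      _ ≤ Filter.liminf (fun n => ∫⁻ x in Ioc u v, ‖auxE f n u v x - c‖ₑ ^ 2) Filter.atTop :=
          lintegral_liminf_le fun n => (((auxE_meas f n u v).sub_const c).enorm.pow_const 2)
      _ ≤ Filter.liminf (fun n : ℕ => ENNReal.ofReal (176 * K' ^ 2 * (v - u))) Filter.atTop := by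
          refine Filter.liminf_le_liminf (Filter.Eventually.of_forall fun n => ?_)
          rw [auxE_int f c n u v huv]
          exact ENNReal.ofReal_le_ofReal (R n)
      _ = _ := by simp
  have lim : Filter.Tendsto (fun K' => ENNReal.ofReal (176 * K' ^ 2 * (v - u))) (nhdsWithin K (Ioi K))
      (nhds (ENNReal.ofReal (176 * K ^ 2 * (v - u)))) := by
    have : Continuous (fun K' => ENNReal.ofReal (176 * K' ^ 2 * (v - u))) :=
      ENNReal.continuous_ofReal.comp (by fun_prop)
    exact this.continuousAt.tendsto.mono_left nhdsWithin_le_nhds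
  exact ge_of_tendsto lim (eventually_mem_nhdsWithin.mono fun K' h => main K' h)

theorem aux_sq_add (x y : ℂ) : ‖x + y‖ₑ ^ 2 ≤ 2 * ‖x‖ₑ ^ 2 + 2 * ‖y‖ₑ ^ 2 := by
  have : ‖x + y‖ ^ 2 ≤ 2 * ‖x‖ ^ 2 + 2 * ‖y‖ ^ 2 := by
    have := pow_le_pow_left₀ (norm_nonneg _) (norm_add_le x y) 2
    nlinarith [sq_nonneg (‖x‖ - ‖y‖)]
  have h := ENNReal.ofReal_le_ofReal this
  rw [ENNReal.ofReal_add (by positivity) (by positivity), ENNReal.ofReal_mul (by norm_num),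
    ENNReal.ofReal_mul (by norm_num)] at h
  simpa [ENNReal.ofReal_pow] using h

theorem aux_weight_le (t : ℝ) : ENNReal.ofReal (((1 + |t|) ^ 2)⁻¹) ≤
    ∑' k : ℕ, ENNReal.ofReal ((1 / 4) ^ k) * (Ioc (-2 ^ (k + 1)) (2 ^ (k + 1) : ℝ)).indicator 1 t := by
  have hex : ∃ k : ℕ, |t| < 2 ^ (k + 1) := by
    obtain ⟨k, hk⟩ := pow_unbounded_of_one_lt |t| (by norm_num : (1:ℝ) < 2)
    exact ⟨k, hk.trans (pow_lt_pow_right₀ (by norm_num) (by omega))⟩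
  classical
  set k := Nat.find hex with hk
  have h1 : |t| < 2 ^ (k + 1) := Nat.find_spec hex
  refine le_trans ?_ (ENNReal.le_tsum k)
  have hm : t ∈ Ioc (-2 ^ (k + 1)) (2 ^ (k + 1) : ℝ) := by
    rw [abs_lt] at h1; exact ⟨h1.1, h1.2.le⟩
  rw [indicator_of_mem hm]
  simp only [Pi.one_apply, mul_one]
  refine ENNReal.ofReal_le_ofReal ?_
  have h2 : (2:ℝ) ^ k ≤ 1 + |t| := by
    rcases Nat.eq_zero_or_pos k with h0 | h0
    · rw [h0]; simp
    · have := Nat.find_min hex (m := k - 1) (by omega)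
      rw [Nat.sub_add_cancel h0] at this
      push Not at this
      linarith
  have h3 : (1/4 : ℝ) ^ k = ((2 ^ k) ^ 2)⁻¹ := by
    rw [← pow_mul, mul_comm, pow_mul, ← inv_pow]; norm_num
  rw [h3]
  gcongr

theorem aux_weighted : ∃ C : ℝ, 0 < C ∧ ∀ (f : ℝ → ℂ), LocallyIntegrable f → ∀ K : ℝ, 0 ≤ K →
    (∀ u v, u < v → (v - u)⁻¹ * ∫ r in u..v, ‖f r - auxAv f u v‖ ≤ K) →
    ∫⁻ t, ENNReal.ofReal (((1 + |t|) ^ 2)⁻¹) * ‖f t - auxAv f (-2) 2‖ₑ ^ 2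
      ≤ ENNReal.ofReal (C * K ^ 2) := by
  have hs : Summable (fun k : ℕ => 4 * (352 * (1/2:ℝ) ^ k + 8 * ((k:ℝ) ^ 2 * (1/2:ℝ) ^ k))) := by
    refine Summable.mul_left _ (Summable.add ?_ ?_)
    · exact (summable_geometric_of_lt_one (by norm_num) (by norm_num)).mul_left _
    · have h := summable_pow_mul_geometric_of_norm_lt_one (R := ℝ) 2 (r := 1/2) (by norm_num)
      exact h.mul_left 8
  set S0 := ∑' k : ℕ, 4 * (352 * (1/2:ℝ) ^ k + 8 * ((k:ℝ) ^ 2 * (1/2:ℝ) ^ k)) with hS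
  have hS0 : 0 ≤ S0 := tsum_nonneg fun k => by positivity
  refine ⟨S0 + 1, by linarith, ?_⟩
  intro f hf K hK hb
  set c : ℕ → ℂ := fun k => auxAv f (-2 ^ (k+1)) (2 ^ (k+1)) with hc
  have hc0 : auxAv f (-2) 2 = c 0 := by simp [hc]
  have hstep : ∀ k, ‖c (k+1) - c 0‖ ≤ ‖c k - c 0‖ + 2 * K := by
    intro k
    have hpos : (0:ℝ) < 2 ^ (k+1) := by positivity
    have h2 : (2:ℝ) ^ (k+1+1) = 2 * 2 ^ (k+1) := by ring
    have := auxAv_sub_le' hf (u := -2 ^ (k+1+1)) (v := 2 ^ (k+1+1)) (u' := -2 ^ (k+1))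
      (v' := 2 ^ (k+1)) (by linarith) (by linarith) (by linarith) (by rw [h2]; ring) (c (k+1))
    have h3 := hb (-2 ^ (k+1+1)) (2 ^ (k+1+1)) (by linarith)
    have h4 : ‖c k - c (k+1)‖ ≤ 2 * K := by
      refine this.trans ?_
      have : (2 ^ (k+1+1) - -2 ^ (k+1+1) : ℝ)⁻¹ *
        ∫ r in (-2 ^ (k+1+1))..(2 ^ (k+1+1)), ‖f r - c (k+1)‖ ≤ K := h3
      linarith
    have h5 := norm_sub_le_norm_sub_add_norm_sub (c (k+1)) (c k) (c 0)
    rw [norm_sub_rev (c (k+1)) (c k)] at h5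
    linarith
  have hck : ∀ k : ℕ, ‖c k - c 0‖ ≤ 2 * k * K := by
    intro k
    induction k with
    | zero => simp
    | succ k ih => push_cast; linarith [hstep k]
  have hI : ∀ k : ℕ, ∫⁻ t in Ioc (-2 ^ (k + 1)) (2 ^ (k + 1) : ℝ), ‖f t - c 0‖ₑ ^ 2 ≤
      ENNReal.ofReal ((352 + 8 * (k:ℝ) ^ 2) * (4 * 2 ^ k) * K ^ 2) := by
    intro k
    have hpos : (0:ℝ) < 2 ^ (k+1) := by positivity
    have J := aux_JN hf hK hb (u := -2 ^ (k+1)) (v := 2 ^ (k+1)) (by linarith)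
    calc _ ≤ ∫⁻ t in Ioc (-2 ^ (k + 1)) (2 ^ (k + 1) : ℝ), (2 * ‖f t - c k‖ₑ ^ 2 + 2 * ‖c k - c 0‖ₑ ^ 2) := by
          refine lintegral_mono fun t => ?_
          have := aux_sq_add (f t - c k) (c k - c 0)
          simpa using this
      _ = 2 * (∫⁻ t in Ioc (-2 ^ (k + 1)) (2 ^ (k + 1) : ℝ), ‖f t - c k‖ₑ ^ 2)
          + 2 * ‖c k - c 0‖ₑ ^ 2 * ENNReal.ofReal (2 ^ (k+1) - -2 ^ (k+1)) := by
          rw [lintegral_add_right _ measurable_const, lintegral_const_mul' _ _ (by simp)]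
          simp
      _ ≤ ENNReal.ofReal 2 * ENNReal.ofReal (176 * K ^ 2 * (2 ^ (k+1) - -2 ^ (k+1)))
          + ENNReal.ofReal 2 * ENNReal.ofReal ((2 * k * K) ^ 2) * ENNReal.ofReal (2 ^ (k+1) - -2 ^ (k+1)) := by
          have : ‖c k - c 0‖ₑ ^ 2 ≤ ENNReal.ofReal ((2 * k * K) ^ 2) := by
            rw [← ofReal_norm, ← ENNReal.ofReal_pow (norm_nonneg _)]
            exact ENNReal.ofReal_le_ofReal (pow_le_pow_left₀ (norm_nonneg _) (hck k) 2)
          simp only [ENNReal.ofReal_ofNat]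
          gcongr
      _ = _ := by
          rw [← ENNReal.ofReal_mul (by norm_num), ← ENNReal.ofReal_mul (by norm_num),
            ← ENNReal.ofReal_mul (by positivity), ← ENNReal.ofReal_add]
          · congr 1; ring
          · have : (0:ℝ) ≤ 2 ^ (k+1) - -2 ^ (k+1) := by linarith
            positivity
          · have : (0:ℝ) ≤ 2 ^ (k+1) - -2 ^ (k+1) := by linarith
            positivity
  rw [hc0]
  have hm : AEMeasurable (fun t => ‖f t - c 0‖ₑ ^ 2) :=
    (hf.aestronglyMeasurable.sub aestronglyMeasurable_const).enorm.pow_const 2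
  calc _ ≤ ∫⁻ t, (∑' k : ℕ, ENNReal.ofReal ((1 / 4) ^ k) *
        (Ioc (-2 ^ (k + 1)) (2 ^ (k + 1) : ℝ)).indicator 1 t) * ‖f t - c 0‖ₑ ^ 2 := by
        refine lintegral_mono fun t => ?_
        gcongr
        exact aux_weight_le t
    _ = ∫⁻ t, (∑' k : ℕ, ENNReal.ofReal ((1 / 4) ^ k) *
        (Ioc (-2 ^ (k + 1)) (2 ^ (k + 1) : ℝ)).indicator (fun t => ‖f t - c 0‖ₑ ^ 2) t) := by
        congr with t
        rw [← ENNReal.tsum_mul_right]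
        congr with k
        rw [mul_assoc]
        congr 1
        by_cases h : t ∈ Ioc (-2 ^ (k + 1)) (2 ^ (k + 1) : ℝ)
        · simp only [indicator_of_mem h, Pi.one_apply, one_mul]
        · simp only [indicator_of_notMem h, zero_mul]
    _ = ∑' k : ℕ, ENNReal.ofReal ((1 / 4) ^ k) *
        ∫⁻ t in Ioc (-2 ^ (k + 1)) (2 ^ (k + 1) : ℝ), ‖f t - c 0‖ₑ ^ 2 := by
        rw [lintegral_tsum fun k => (hm.indicator measurableSet_Ioc).const_mul _]
        congr with k
        rw [lintegral_const_mul' _ _ ENNReal.ofReal_ne_top, lintegral_indicator measurableSet_Ioc]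
    _ ≤ ∑' k : ℕ, ENNReal.ofReal (4 * (352 * (1/2:ℝ) ^ k + 8 * ((k:ℝ) ^ 2 * (1/2:ℝ) ^ k)) * K ^ 2) := by
        refine ENNReal.tsum_le_tsum fun k => ?_
        calc _ ≤ ENNReal.ofReal ((1 / 4) ^ k) *
              ENNReal.ofReal ((352 + 8 * (k:ℝ) ^ 2) * (4 * 2 ^ k) * K ^ 2) := by
                gcongr; exact hI k
          _ = _ := by
            rw [← ENNReal.ofReal_mul (by positivity)]
            congr 1
            have : (1/4:ℝ)^k = (1/2)^k * (1/2)^k := by rw [← mul_pow]; norm_num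
            have h2 : (1/2:ℝ)^k * 2 ^ k = 1 := by rw [← mul_pow]; norm_num
            rw [this]
            linear_combination ((1/2:ℝ)^k * (352 + 8 * (k:ℝ)^2) * 4 * K^2) * h2
    _ = ENNReal.ofReal (S0 * K ^ 2) := by
        rw [← ENNReal.ofReal_tsum_of_nonneg (fun k => by positivity) (hs.mul_right _), tsum_mul_right]
    _ ≤ _ := by
        refine ENNReal.ofReal_le_ofReal ?_
        gcongr; linarith

theorem aux_norm_e2pi (t : ℝ) : ‖e2pi t‖ = 1 := by
  rw [e2pi, show (2 * (π : ℂ) * Complex.I * (t : ℂ)) = ((2 * π * t : ℝ) : ℂ) * Complex.I by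
    push_cast; ring]
  exact Complex.norm_exp_ofReal_mul_I _

theorem aux_e2pi_add (s t : ℝ) : e2pi (s + t) = e2pi s * e2pi t := by
  simp only [e2pi, ← Complex.exp_add]; congr 1; push_cast; ring

theorem aux_e2pi_cont : Continuous e2pi := by
  unfold e2pi; fun_prop

theorem aux_fourier_e2pi (f : ℝ → ℂ) (ξ : ℝ) : 𝓕 f ξ = ∫ t, e2pi (-(ξ * t)) * f t := by
  rw [Real.fourier_real_eq_integral_exp_smul]
  congr with t
  rw [smul_eq_mul, e2pi]; congr 2; push_cast; ring

theorem aux_phim_cont (φ : SchwartzMap ℝ ℂ) (a b : ℝ) : Continuous (phim φ a b) := by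
  have := aux_e2pi_cont
  have := φ.continuous
  unfold phim; fun_prop

theorem aux_phim_int (φ : SchwartzMap ℝ ℂ) {a b : ℝ} (hab : a < b) : Integrable (phim φ a b) := by
  have h : Integrable (fun x => φ ((b - a) * x)) := φ.integrable.comp_mul_left' (sub_pos.2 hab).ne'
  refine (h.norm.const_mul (b - a)).mono' (aux_phim_cont φ a b).aestronglyMeasurable
    (Filter.Eventually.of_forall fun x => ?_)
  have : ‖b - a‖ = b - a := Real.norm_of_nonneg (sub_pos.2 hab).le
  simp only [phim, norm_mul, aux_norm_e2pi, Complex.norm_real, this, mul_one, le_refl]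

theorem aux_fourier_phim (φ : SchwartzMap ℝ ℂ) {a b : ℝ} (hab : a < b) (ξ : ℝ) :
    𝓕 (phim φ a b) ξ = 𝓕 (φ : ℝ → ℂ) ((ξ - a) / (b - a)) := by
  have hL : 0 < b - a := sub_pos.2 hab
  rw [aux_fourier_e2pi, aux_fourier_e2pi]
  have := Measure.integral_comp_mul_left (fun w => e2pi (-((ξ - a) / (b - a) * w)) * φ w) (b - a)
  rw [abs_of_pos (inv_pos.2 hL)] at this
  have h2 := congrArg (fun z => (b - a) • z) this
  simp only [smul_smul, mul_inv_cancel₀ hL.ne', one_smul] at h2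
  rw [← h2, ← integral_smul]
  congr with t
  have : -((ξ - a) / (b - a) * ((b - a) * t)) = -(ξ * t) + a * t := by
    field_simp; ring
  rw [this, aux_e2pi_add]
  simp only [phim, Complex.real_smul]
  ring

theorem aux_conv_eq (f g : ℝ → ℂ) : conv f g =
    MeasureTheory.convolution f g (ContinuousLinearMap.mul ℂ ℂ) volume := rfl

theorem aux_near (φ : SchwartzMap ℝ ℂ) (hφ : Function.support (𝓕 ⇑φ) ⊆ Set.Ioo 0 1)
    {B : ℝ} (hB : ∀ ξ, ‖𝓕 (φ : ℝ → ℂ) ξ‖ ≤ B) {N : ℕ} {a b : Fin N → ℝ} (hab : Admissible a b)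
    {f : ℝ → ℂ} (h1 : Integrable f) (h2 : MemLp f 2) :
    ∑ m, ∫⁻ x, ‖conv f (phim φ (a m) (b m)) x‖ₑ ^ 2 ≤
      ENNReal.ofReal (B ^ 2) * ∫⁻ x, ‖f x‖ₑ ^ 2 := by
  obtain ⟨hlt, h0, hdisj⟩ := hab
  have F : ∀ m, ∫⁻ x, ‖conv f (phim φ (a m) (b m)) x‖ₑ ^ 2 =
      ∫⁻ ξ, ‖𝓕 f ξ‖ₑ ^ 2 * ‖𝓕 (φ : ℝ → ℂ) ((ξ - a m) / (b m - a m))‖ₑ ^ 2 := by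
    intro m
    set g := phim φ (a m) (b m) with hg
    have gi : Integrable g := aux_phim_int φ (hlt m)
    have ci : Integrable (conv f g) := by
      rw [aux_conv_eq]; exact h1.integrable_convolution _ gi
    obtain ⟨M, hM⟩ : ∃ M, ∀ x, ‖g x‖ ≤ M := by
      obtain ⟨M, hM⟩ := φ.decay 0 0
      refine ⟨(b m - a m) * M, fun x => ?_⟩
      have := hM.2 ((b m - a m) * x)
      have hp := sub_pos.2 (hlt m)
      have e : ‖b m - a m‖ = b m - a m := Real.norm_of_nonneg hp.le
      simp only [pow_zero, one_mul, norm_iteratedFDeriv_zero] at this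
      simp only [hg, phim, norm_mul, aux_norm_e2pi, Complex.norm_real, e, mul_one]
      gcongr
    have cb : ∀ x, ‖conv f g x‖ ≤ (∫ t, ‖f t‖) * M := by
      intro x
      rw [← integral_mul_const]
      refine norm_integral_le_of_norm_le (h1.norm.mul_const M) (Filter.Eventually.of_forall fun t => ?_)
      rw [norm_mul]; gcongr; exact hM _
    have c2 : MemLp (conv f g) 2 := by
      rw [memLp_two_iff_integrable_sq_norm ci.aestronglyMeasurable]
      refine (ci.norm.const_mul ((∫ t, ‖f t‖) * M)).mono' (ci.aestronglyMeasurable.norm.pow 2)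
        (Filter.Eventually.of_forall fun x => ?_)
      rw [Real.norm_of_nonneg (by positivity), pow_two]
      gcongr
      exact cb x
    rw [← aux_plancherel ci c2]
    congr with ξ
    rw [aux_conv_eq, Real.fourier_mul_convolution_eq h1 gi, enorm_mul, mul_pow,
      aux_fourier_phim φ (hlt m)]
  have hfc : Continuous (𝓕 (φ : ℝ → ℂ)) :=
      VectorFourier.fourierIntegral_continuous Real.continuous_fourierChar
        (by exact continuous_inner) φ.integrable
  have hfc' : Continuous (𝓕 f) :=
      VectorFourier.fourierIntegral_continuous Real.continuous_fourierChar
        (by exact continuous_inner) h1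
  have hsupp : ∀ m ξ, 𝓕 (φ : ℝ → ℂ) ((ξ - a m) / (b m - a m)) ≠ 0 → ξ ∈ Icc (a m) (b m) := by
    intro m ξ h
    have hp := sub_pos.2 (hlt m)
    have := hφ h
    rw [mem_Ioo, lt_div_iff₀ hp, div_lt_iff₀ hp] at this
    constructor <;> linarith [this.1, this.2]
  simp_rw [F]
  rw [← lintegral_finsetSum' _ (fun m _ => by
    refine Measurable.aemeasurable ?_
    have : Continuous fun ξ => 𝓕 (φ : ℝ → ℂ) ((ξ - a m) / (b m - a m)) := by fun_prop
    exact (hfc'.measurable.enorm.pow_const 2).mul (this.measurable.enorm.pow_const 2)),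
    ← aux_plancherel h1 h2, ← lintegral_const_mul' _ _ ENNReal.ofReal_ne_top]
  refine lintegral_mono fun ξ => ?_
  rw [← Finset.mul_sum, mul_comm]
  gcongr
  by_cases hex : ∃ m, 𝓕 (φ : ℝ → ℂ) ((ξ - a m) / (b m - a m)) ≠ 0
  · obtain ⟨m, hm⟩ := hex
    rw [Finset.sum_eq_single m]
    · rw [← ofReal_norm, ← ENNReal.ofReal_pow (norm_nonneg _)]
      exact ENNReal.ofReal_le_ofReal (pow_le_pow_left₀ (norm_nonneg _) (hB _) 2)
    · intro m' _ hne
      by_contra hcon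
      have : 𝓕 (φ : ℝ → ℂ) ((ξ - a m') / (b m' - a m')) ≠ 0 := by
        intro h; apply hcon; rw [h]; simp
      exact Set.disjoint_left.1 (hdisj m' m hne) (hsupp m' ξ this) (hsupp m ξ hm)
    · simp
  · push Not at hex
    simp [hex]

def AuxGood (ψ ψ' : ℝ → ℂ) (B : ℝ) : Prop :=
  (∀ y, HasDerivAt ψ (ψ' y) y) ∧ ∀ y, ‖ψ y‖ ≤ B / (1 + |y|) ^ 3 ∧ ‖ψ' y‖ ≤ B / (1 + |y|) ^ 3

theorem AuxGood.nonneg {ψ ψ' : ℝ → ℂ} {B : ℝ} (h : AuxGood ψ ψ' B) : 0 ≤ B := by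
  have := (norm_nonneg _).trans (h.2 0).1
  simpa using this

theorem AuxGood.cont {ψ ψ' : ℝ → ℂ} {B : ℝ} (h : AuxGood ψ ψ' B) : Continuous ψ :=
  continuous_iff_continuousAt.2 fun y => (h.1 y).continuousAt

def auxD (ψ : ℝ → ℂ) (x s t : ℝ) : ℂ := ψ (s * (x - t)) - ψ (s * (0 - t))

theorem auxD_bound {ψ ψ' : ℝ → ℂ} {B : ℝ} (h : AuxGood ψ ψ' B) {x s t : ℝ} (hx : |x| ≤ 1)
    (ht : 2 ≤ |t|) (hs : 0 < s) : ‖auxD ψ x s t‖ ≤ 16 * B * min s 1 / (1 + s * |t|) ^ 3 := by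
  have hB := h.nonneg
  have hp : 0 < 1 + s * |t| := by positivity
  have key : ∀ θ ∈ Icc (0:ℝ) 1, B / (1 + |s * (θ * x - t)|) ^ 3 ≤ 8 * B / (1 + s * |t|) ^ 3 := by
    intro θ hθ
    have h1 : |θ * x| ≤ 1 := by
      rw [abs_mul, abs_of_nonneg hθ.1]
      nlinarith [hθ.1, hθ.2, abs_nonneg x]
    have h2 : |t| / 2 ≤ |θ * x - t| := by
      have := abs_sub_abs_le_abs_sub t (θ * x)
      rw [abs_sub_comm] at this
      linarith
    have h3 : (1 + s * |t|) / 2 ≤ 1 + |s * (θ * x - t)| := by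
      rw [abs_mul, abs_of_pos hs]
      nlinarith [mul_le_mul_of_nonneg_left h2 hs.le]
    have h4 : ((1 + s * |t|) / 2) ^ 3 ≤ (1 + |s * (θ * x - t)|) ^ 3 := by gcongr
    calc _ ≤ B / ((1 + s * |t|) / 2) ^ 3 := by gcongr
      _ = _ := by field_simp; norm_num
  have b1 : ‖auxD ψ x s t‖ ≤ 16 * B / (1 + s * |t|) ^ 3 := by
    have e1 := (h.2 (s * (1 * x - t))).1.trans (key 1 (by simp))
    have e2 := (h.2 (s * (0 * x - t))).1.trans (key 0 (by simp))
    rw [one_mul] at e1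
    rw [zero_mul] at e2
    refine (norm_sub_le _ _).trans ((add_le_add e1 e2).trans (le_of_eq ?_))
    ring
  have b2 : ‖auxD ψ x s t‖ ≤ 16 * B * s / (1 + s * |t|) ^ 3 := by
    have hd : ∀ θ ∈ Icc (0:ℝ) 1, HasDerivWithinAt (fun θ => ψ (s * (θ * x - t)))
        ((s * x) • ψ' (s * (θ * x - t))) (Icc 0 1) θ := by
      intro θ _
      have : HasDerivAt (fun θ : ℝ => s * (θ * x - t)) (s * x) θ := by
        simpa using (((hasDerivAt_id θ).mul_const x).sub_const t).const_mul s
      exact ((h.1 _).scomp θ this).hasDerivWithinAt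
    have := norm_image_sub_le_of_norm_deriv_le_segment_01' hd (C := 8 * B * s / (1 + s * |t|) ^ 3) (by
      intro θ hθ
      rw [norm_smul, Real.norm_eq_abs, abs_mul, abs_of_pos hs]
      have e := (h.2 (s * (θ * x - t))).2.trans (key θ (Ico_subset_Icc_self hθ))
      calc _ ≤ s * 1 * (8 * B / (1 + s * |t|) ^ 3) := by gcongr
        _ = _ := by ring)
    simp only [one_mul, zero_mul] at this
    refine this.trans ?_
    gcongr
    linarith
  rcases le_total s 1 with h1 | h1
  · rw [min_eq_left h1]; exact b2
  · rw [min_eq_right h1, mul_one]; exact b1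

theorem aux_pointwise {δ s t B d : ℝ} (hδ : 0 < δ) (h1 : δ ≤ s) (h2 : s ≤ 2 * δ) (ht : 2 ≤ |t|)
    (hB : 0 ≤ B) (hd0 : 0 ≤ d) (hd : d ≤ s * (16 * B * min s 1 / (1 + s * |t|) ^ 3)) :
    (2 / δ + 8 * π ^ 2 * δ * t ^ 2) * d ^ 2 ≤
      1310720 * B ^ 2 * min δ δ⁻¹ * ((1 + |t|) ^ 2)⁻¹ := by
  have hpi : π ^ 2 ≤ 10 := by nlinarith [Real.pi_lt_d2, Real.pi_pos]
  set T := |t| with hT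
  have hT0 : 0 ≤ T := by linarith
  have ht2 : t ^ 2 = T ^ 2 := (sq_abs t).symm
  set p := 1 + δ * T with hp
  have hp1 : 1 ≤ p := by nlinarith [mul_nonneg hδ.le hT0]
  have hp0 : 0 < p := by linarith
  set μ := min δ 1 with hμ
  have hμ0 : 0 < μ := lt_min hδ one_pos
  have w1 : 2 / δ + 8 * π ^ 2 * δ * t ^ 2 ≤ 80 * δ⁻¹ * p ^ 2 := by
    rw [ht2]
    have : 2 / δ + 8 * π ^ 2 * δ * T ^ 2 = δ⁻¹ * (2 + 8 * π ^ 2 * (δ * T) ^ 2) := by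
      field_simp
    rw [this]
    have : 2 + 8 * π ^ 2 * (δ * T) ^ 2 ≤ 80 * p ^ 2 := by
      have := mul_le_mul_of_nonneg_right hpi (sq_nonneg (δ * T))
      nlinarith [mul_nonneg hδ.le hT0]
    calc _ ≤ δ⁻¹ * (80 * p ^ 2) := by gcongr
      _ = _ := by ring
  have hms : min s 1 ≤ 2 * μ := by
    rcases le_total δ 1 with h | h
    · rw [hμ, min_eq_left h]; exact (min_le_left _ _).trans h2
    · rw [hμ, min_eq_right h]; exact (min_le_right _ _).trans (by norm_num)
  have hm0 : 0 ≤ min s 1 := le_min (by linarith) zero_le_one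
  have w2 : d ≤ 64 * B * δ * μ / p ^ 3 := by
    refine hd.trans ?_
    calc s * (16 * B * min s 1 / (1 + s * T) ^ 3) ≤ (2 * δ) * (16 * B * (2 * μ) / p ^ 3) := by
          have : 0 ≤ s := by linarith
          gcongr
          rw [hp]; gcongr
      _ = _ := by ring
  have w3 : δ * μ ^ 2 * (1 + T) ^ 2 ≤ 4 * min δ δ⁻¹ * p ^ 2 := by
    rcases le_total δ 1 with h | h
    · have h' : δ ≤ δ⁻¹ := h.trans ((one_le_inv₀ hδ).2 h)
      rw [hμ, min_eq_left h, min_eq_left h']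
      have : δ * (1 + T) ≤ p := by rw [hp]; linarith
      have h3 : (δ * (1 + T)) ^ 2 ≤ p ^ 2 := by gcongr
      nlinarith [mul_le_mul_of_nonneg_left h3 hδ.le, mul_nonneg hδ.le (sq_nonneg p)]
    · have h' : δ⁻¹ ≤ δ := (inv_le_one_of_one_le₀ h).trans h
      rw [hμ, min_eq_right h, min_eq_right h']
      have : δ * (1 + T) ≤ 2 * p := by rw [hp]; nlinarith
      have h3 : (δ * (1 + T)) ^ 2 ≤ (2 * p) ^ 2 := by gcongr
      calc δ * 1 ^ 2 * (1 + T) ^ 2 = δ⁻¹ * (δ * (1 + T)) ^ 2 := by field_simp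
        _ ≤ δ⁻¹ * (2 * p) ^ 2 := by gcongr
        _ = _ := by ring
  calc (2 / δ + 8 * π ^ 2 * δ * t ^ 2) * d ^ 2
      ≤ (80 * δ⁻¹ * p ^ 2) * (64 * B * δ * μ / p ^ 3) ^ 2 := by gcongr
    _ = 327680 * B ^ 2 * (δ * μ ^ 2) / p ^ 4 := by field_simp; ring
    _ = 327680 * B ^ 2 * (δ * μ ^ 2 * (1 + T) ^ 2) / p ^ 4 * ((1 + T) ^ 2)⁻¹ := by
        have : (1 + T) ≠ 0 := by positivity
        field_simp
    _ ≤ 327680 * B ^ 2 * (4 * min δ δ⁻¹ * p ^ 2) / p ^ 4 * ((1 + T) ^ 2)⁻¹ := by gcongr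
    _ = 1310720 * B ^ 2 * min δ δ⁻¹ / p ^ 2 * ((1 + T) ^ 2)⁻¹ := by field_simp; ring
    _ ≤ 1310720 * B ^ 2 * min δ δ⁻¹ / 1 * ((1 + T) ^ 2)⁻¹ := by
        have : 0 ≤ min δ δ⁻¹ := le_min hδ.le (inv_nonneg.2 hδ.le)
        gcongr
        exact one_le_pow₀ hp1
    _ = _ := by rw [div_one]

theorem aux_CS {α : Type*} [MeasurableSpace α] (μ : Measure α) {g : α → ℝ≥0∞} (hg : AEMeasurable g μ) :
    (∫⁻ x, g x ∂μ) ^ 2 ≤ μ univ * ∫⁻ x, g x ^ 2 ∂μ := by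
  have := ENNReal.lintegral_mul_le_Lp_mul_Lq μ Real.HolderConjugate.two_two
    (f := fun _ => 1) (g := g) aemeasurable_const hg
  simp only [Pi.mul_apply, one_mul, ENNReal.one_rpow, lintegral_const] at this
  have h := pow_le_pow_left' this 2
  rw [mul_pow, ← ENNReal.rpow_natCast, ← ENNReal.rpow_natCast, ← ENNReal.rpow_natCast,
    ← ENNReal.rpow_mul, ← ENNReal.rpow_mul] at h
  norm_num at h
  exact h

theorem aux_q_memLp : MemLp (fun t : ℝ => (1 + |t|)⁻¹) 2 := by
  have hc : Continuous (fun t : ℝ => (1 + |t|)⁻¹) :=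
    (continuous_const.add continuous_abs).inv₀ fun t => (by positivity : (0:ℝ) < 1 + |t|).ne'
  rw [memLp_two_iff_integrable_sq_norm hc.aestronglyMeasurable]
  refine integrable_inv_one_add_sq.mono' (hc.norm.pow 2).aestronglyMeasurable
    (Filter.Eventually.of_forall fun t => ?_)
  rw [Real.norm_of_nonneg (by positivity), Real.norm_of_nonneg (by positivity), inv_pow]
  have : 1 + t ^ 2 ≤ (1 + |t|) ^ 2 := by nlinarith [sq_abs t, abs_nonneg t]
  gcongr

theorem aux_k_memLp {h : ℝ → ℂ} (hm : AEStronglyMeasurable h)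
    (hW : ∫⁻ t, ENNReal.ofReal (((1 + |t|) ^ 2)⁻¹) * ‖h t‖ₑ ^ 2 ≠ ∞) :
    MemLp (fun t : ℝ => (1 + |t|)⁻¹ * ‖h t‖) 2 := by
  have hc : Continuous (fun t : ℝ => (1 + |t|)⁻¹) :=
    (continuous_const.add continuous_abs).inv₀ fun t => (by positivity : (0:ℝ) < 1 + |t|).ne'
  refine ⟨hc.aestronglyMeasurable.mul hm.norm, ?_⟩
  rw [eLpNorm_lt_top_iff_lintegral_rpow_enorm_lt_top (by norm_num) (by norm_num)]
  refine lt_of_eq_of_lt ?_ hW.lt_top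
  congr with t
  simp only [ENNReal.toReal_ofNat, ENNReal.rpow_ofNat, enorm_mul, mul_pow, enorm_norm]
  congr 1
  rw [← ofReal_norm, Real.norm_of_nonneg (by positivity), ← ENNReal.ofReal_pow (by positivity), inv_pow]

theorem aux_four {h κ : ℝ → ℂ} (hm : AEStronglyMeasurable h)
    (hW : ∫⁻ t, ENNReal.ofReal (((1 + |t|) ^ 2)⁻¹) * ‖h t‖ₑ ^ 2 ≠ ∞)
    (h0 : ∀ t, |t| < 2 → h t = 0) (hκ : AEStronglyMeasurable κ) {M : ℝ} (hM0 : 0 ≤ M)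
    (hM : ∀ t, 2 ≤ |t| → ‖κ t‖ ≤ M / (1 + |t|) ^ 3) :
    Integrable (fun t => h t * κ t) ∧ MemLp (fun t => h t * κ t) 2 ∧
    Integrable (fun t : ℝ => (t : ℂ) * (h t * κ t)) ∧ MemLp (fun t : ℝ => (t : ℂ) * (h t * κ t)) 2 := by
  have K := aux_k_memLp hm hW
  have KQ : Integrable (fun t : ℝ => M * ((1 + |t|)⁻¹ * ‖h t‖ * (1 + |t|)⁻¹)) :=
    (K.integrable_mul aux_q_memLp).const_mul M
  have K' : MemLp (fun t : ℝ => M * ((1 + |t|)⁻¹ * ‖h t‖)) 2 := K.const_mul M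
  have m1 : AEStronglyMeasurable (fun t => h t * κ t) := hm.mul hκ
  have m2 : AEStronglyMeasurable (fun t : ℝ => (t : ℂ) * (h t * κ t)) :=
    Complex.continuous_ofReal.aestronglyMeasurable.mul m1
  have b2 : ∀ t : ℝ, ‖(t : ℂ) * (h t * κ t)‖ ≤ M * ((1 + |t|)⁻¹ * ‖h t‖ * (1 + |t|)⁻¹) := by
    intro t
    by_cases ht : |t| < 2
    · simp [h0 t ht]
    · push Not at ht
      rw [norm_mul, norm_mul, Complex.norm_real, Real.norm_eq_abs]
      calc _ ≤ (1 + |t|) * (‖h t‖ * (M / (1 + |t|) ^ 3)) := by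
            gcongr
            · linarith
            · exact hM t ht
        _ = _ := by field_simp
  have b1 : ∀ t : ℝ, ‖h t * κ t‖ ≤ M * ((1 + |t|)⁻¹ * ‖h t‖ * (1 + |t|)⁻¹) := by
    intro t
    by_cases ht : |t| < 2
    · simp [h0 t ht]
    · push Not at ht
      refine le_trans ?_ (b2 t)
      rw [norm_mul (t:ℂ), Complex.norm_real, Real.norm_eq_abs]
      exact le_mul_of_one_le_left (norm_nonneg _) (by linarith)
  have b3 : ∀ t : ℝ, M * ((1 + |t|)⁻¹ * ‖h t‖ * (1 + |t|)⁻¹) ≤ ‖M * ((1 + |t|)⁻¹ * ‖h t‖)‖ := by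
    intro t
    rw [Real.norm_of_nonneg (by positivity)]
    refine mul_le_mul_of_nonneg_left ?_ hM0
    have h1 : 1 ≤ 1 + |t| := by linarith [abs_nonneg t]
    exact mul_le_of_le_one_right (by positivity) (inv_le_one_of_one_le₀ h1)
  exact ⟨KQ.mono' m1 (Filter.Eventually.of_forall b1),
    K'.mono m1 (Filter.Eventually.of_forall fun t => (b1 t).trans (b3 t)),
    KQ.mono' m2 (Filter.Eventually.of_forall b2),
    K'.mono m2 (Filter.Eventually.of_forall fun t => (b2 t).trans (b3 t))⟩

theorem aux_group_sieve {ι : Type*} (S : Finset ι) (a : ι → ℝ) (δ : ℝ) (hδ : 0 < δ)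
    (hd : ∀ m ∈ S, ∀ m' ∈ S, m ≠ m' → Disjoint (Ioc (a m) (a m + δ)) (Ioc (a m') (a m' + δ)))
    {h κ : ℝ → ℂ} (hm : AEStronglyMeasurable h)
    (hW : ∫⁻ t, ENNReal.ofReal (((1 + |t|) ^ 2)⁻¹) * ‖h t‖ₑ ^ 2 ≠ ∞)
    (h0 : ∀ t, |t| < 2 → h t = 0) (hκ : AEStronglyMeasurable κ) {M : ℝ} (hM0 : 0 ≤ M)
    (hM : ∀ t, 2 ≤ |t| → ‖κ t‖ ≤ M / (1 + |t|) ^ 3) {A : ℝ} (hA0 : 0 ≤ A)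
    (hA : ∀ t, 2 ≤ |t| → (2 / δ + 8 * π ^ 2 * δ * t ^ 2) * ‖κ t‖ ^ 2 ≤ A * ((1 + |t|) ^ 2)⁻¹) :
    ∑ m ∈ S, ‖𝓕 (fun t => h t * κ t) (a m)‖ₑ ^ 2 ≤
      ENNReal.ofReal A * ∫⁻ t, ENNReal.ofReal (((1 + |t|) ^ 2)⁻¹) * ‖h t‖ₑ ^ 2 := by
  obtain ⟨i1, i2, i3, i4⟩ := aux_four hm hW h0 hκ hM0 hM
  refine (aux_sieve S a δ hδ hd i1 i2 i3 i4).trans ?_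
  rw [← lintegral_const_mul' _ _ ENNReal.ofReal_ne_top]
  refine lintegral_mono fun t => ?_
  by_cases ht : |t| < 2
  · simp [h0 t ht]
  · push Not at ht
    have := ENNReal.ofReal_le_ofReal (hA t ht)
    rw [ENNReal.ofReal_mul (by positivity), ENNReal.ofReal_mul hA0, ENNReal.ofReal_pow (norm_nonneg _),
      ofReal_norm] at this
    rw [enorm_mul, mul_pow, mul_comm (‖h t‖ₑ ^ 2), ← mul_assoc, ← mul_assoc]
    gcongr


theorem auxD_bound' {ψ ψ' : ℝ → ℂ} {B : ℝ} (h : AuxGood ψ ψ' B) {x s t δ : ℝ} (hx : |x| ≤ 1)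
    (ht : 2 ≤ |t|) (hδ : 0 < δ) (hs : δ ≤ s) :
    ‖auxD ψ x s t‖ ≤ (16 * B / (min δ 1) ^ 3) / (1 + |t|) ^ 3 := by
  have hB := h.nonneg
  have hs0 : 0 < s := hδ.trans_le hs
  refine (auxD_bound h hx ht hs0).trans ?_
  have hμ : 0 < min δ 1 := lt_min hδ one_pos
  rw [div_div, ← mul_pow]
  have h1 : min δ 1 * (1 + |t|) ≤ 1 + s * |t| := by
    have e1 := min_le_left δ 1
    have e2 := min_le_right δ 1
    nlinarith [abs_nonneg t, mul_le_mul_of_nonneg_right (e1.trans hs) (abs_nonneg t)]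
  calc _ ≤ 16 * B * 1 / (1 + s * |t|) ^ 3 := by
        gcongr
        exact min_le_right _ _
    _ ≤ 16 * B * 1 / (min δ 1 * (1 + |t|)) ^ 3 := by gcongr
    _ = _ := by rw [mul_one]

theorem auxD_cont {ψ : ℝ → ℂ} (h : Continuous ψ) (x : ℝ) :
    Continuous (fun p : ℝ × ℝ => auxD ψ x p.1 p.2) := by
  unfold auxD
  fun_prop

theorem auxD_ftc {φ φ' η η' : ℝ → ℂ} {B : ℝ} (hφ : AuxGood φ φ' B) (hη : AuxGood η η' B)
    (hrel : ∀ y : ℝ, η y = φ y + y * φ' y) (x t δ L : ℝ) :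
    ∫ s in δ..L, auxD η x s t = L * auxD φ x L t - δ * auxD φ x δ t := by
  have key : ∀ c s : ℝ, HasDerivAt (fun s : ℝ => (s : ℂ) * φ (s * c)) (η (s * c)) s := by
    intro c s
    have h1 : HasDerivAt (fun s : ℝ => (s : ℂ)) 1 s := Complex.ofRealCLM.hasDerivAt
    have h2 : HasDerivAt (fun s : ℝ => s * c) c s := by
      simpa using (hasDerivAt_id s).mul_const c
    have h3 : HasDerivAt (fun s : ℝ => φ (s * c)) (c • φ' (s * c)) s := (hφ.1 (s * c)).scomp s h2
    refine (h1.mul h3).congr_deriv ?_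
    rw [hrel, Complex.real_smul]
    push_cast
    ring
  have hd : ∀ s ∈ uIcc δ L, HasDerivAt (fun s : ℝ => (s : ℂ) * auxD φ x s t) (auxD η x s t) s := by
    intro s _
    refine ((key (x - t) s).sub (key (0 - t) s)).congr_of_eventuallyEq
      (Filter.Eventually.of_forall fun s => ?_)
    simp only [auxD, Pi.sub_apply]
    ring
  have hc : Continuous (fun s => auxD η x s t) :=
    (auxD_cont hη.cont x).comp (continuous_id.prodMk continuous_const)
  exact intervalIntegral.integral_eq_sub_of_hasDerivAt hd (hc.intervalIntegrable _ _)

section far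
variable {φ φ' η η' : ℝ → ℂ} {B : ℝ}

theorem auxF_int {h : ℝ → ℂ} (hm : AEStronglyMeasurable h)
    (hW : ∫⁻ t, ENNReal.ofReal (((1 + |t|) ^ 2)⁻¹) * ‖h t‖ₑ ^ 2 ≠ ∞)
    (h0 : ∀ t, |t| < 2 → h t = 0) (hη : AuxGood η η' B) {x δ L : ℝ} (hx : |x| ≤ 1) (hδ : 0 < δ)
    (ξ : ℝ) :
    Integrable (fun p : ℝ × ℝ => e2pi (-(ξ * p.2)) * (h p.2 * auxD η x p.1 p.2))
      ((volume.restrict (Ioc δ L)).prod volume) := by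
  have hB := hη.nonneg
  set M := 16 * B / (min δ 1) ^ 3 with hM
  have hμ : 0 < min δ 1 := lt_min hδ one_pos
  have hM0 : 0 ≤ M := by positivity
  have hc : Continuous (fun t : ℝ => ((M / (1 + |t|) ^ 3 : ℝ) : ℂ)) :=
    Complex.continuous_ofReal.comp (continuous_const.div (by fun_prop)
      fun t => (by positivity : (0:ℝ) < (1 + |t|) ^ 3).ne')
  have i := (aux_four hm hW h0 (κ := fun t : ℝ => ((M / (1 + |t|) ^ 3 : ℝ) : ℂ)) hc.aestronglyMeasurable hM0
    (fun t _ => by rw [Complex.norm_real, Real.norm_of_nonneg (by positivity)])).1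
  have i2 := (i.norm.comp_snd (volume.restrict (Ioc δ L)))
  refine i2.mono' ?_ ?_
  · refine AEStronglyMeasurable.mul ?_ (AEStronglyMeasurable.mul hm.comp_snd
      (auxD_cont hη.cont x).aestronglyMeasurable)
    exact (aux_e2pi_cont.comp (by fun_prop)).aestronglyMeasurable
  · have : ∀ᵐ p : ℝ × ℝ ∂((volume.restrict (Ioc δ L)).prod volume), p.1 ∈ Ioc δ L :=
      Measure.quasiMeasurePreserving_fst.ae (ae_restrict_mem measurableSet_Ioc)
    filter_upwards [this] with p hp
    rw [norm_mul, aux_norm_e2pi, one_mul, norm_mul, norm_mul]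
    by_cases ht : |p.2| < 2
    · simp [h0 _ ht]
    · push Not at ht
      rw [Complex.norm_real, Real.norm_of_nonneg (by positivity)]
      gcongr
      exact auxD_bound' hη hx ht hδ hp.1.le

theorem auxD_aesm {ψ : ℝ → ℂ} (h : Continuous ψ) (x s : ℝ) :
    AEStronglyMeasurable (fun t => auxD ψ x s t) :=
  ((auxD_cont h x).comp (continuous_const.prodMk continuous_id)).aestronglyMeasurable

theorem auxκ_bound {ψ ψ' : ℝ → ℂ} (h : AuxGood ψ ψ' B) {x s t : ℝ} (hx : |x| ≤ 1)
    (ht : 2 ≤ |t|) (hs : 0 < s) :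
    ‖(s : ℂ) * auxD ψ x s t‖ ≤ (s * (16 * B / (min s 1) ^ 3)) / (1 + |t|) ^ 3 := by
  rw [norm_mul, Complex.norm_real, Real.norm_of_nonneg hs.le, mul_div_assoc]
  gcongr
  exact auxD_bound' h hx ht hs le_rfl

theorem auxF_eq {h : ℝ → ℂ} (hm : AEStronglyMeasurable h)
    (hW : ∫⁻ t, ENNReal.ofReal (((1 + |t|) ^ 2)⁻¹) * ‖h t‖ₑ ^ 2 ≠ ∞)
    (h0 : ∀ t, |t| < 2 → h t = 0) (hφ : AuxGood φ φ' B) (hη : AuxGood η η' B)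
    (hrel : ∀ y : ℝ, η y = φ y + y * φ' y) {x δ L : ℝ} (hx : |x| ≤ 1) (hδ : 0 < δ) (hL : δ ≤ L)
    (ξ : ℝ) :
    𝓕 (fun t => h t * ((L : ℂ) * auxD φ x L t)) ξ =
      𝓕 (fun t => h t * ((δ : ℂ) * auxD φ x δ t)) ξ
      + ∫ s in Ioc δ L, 𝓕 (fun t => h t * auxD η x s t) ξ := by
  have hB := hφ.nonneg
  have I1 : ∀ s : ℝ, 0 < s → Integrable (fun t : ℝ => e2pi (-(ξ * t)) * (h t * ((s : ℂ) * auxD φ x s t))) := by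
    intro s hs
    have hμ : 0 < min s 1 := lt_min hs one_pos
    have := (aux_four hm hW h0 (κ := fun t : ℝ => (s : ℂ) * auxD φ x s t)
      (aestronglyMeasurable_const.mul (auxD_aesm hφ.cont x s))
      (by positivity) (fun t ht => auxκ_bound hφ hx ht hs)).1
    refine this.norm.mono' ?_ (Filter.Eventually.of_forall fun t => ?_)
    · exact (aux_e2pi_cont.comp (by fun_prop)).aestronglyMeasurable.mul this.1
    · rw [norm_mul, aux_norm_e2pi, one_mul]
  simp only [aux_fourier_e2pi]
  rw [integral_integral_swap (auxF_int hm hW h0 hη hx hδ ξ),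
    ← sub_eq_iff_eq_add', ← integral_sub (I1 L (hδ.trans_le hL)) (I1 δ hδ)]
  congr with t
  rw [integral_const_mul, integral_const_mul, ← intervalIntegral.integral_of_le hL,
    auxD_ftc hφ hη hrel]
  ring

theorem auxF_sq {h : ℝ → ℂ} (hm : AEStronglyMeasurable h)
    (hW : ∫⁻ t, ENNReal.ofReal (((1 + |t|) ^ 2)⁻¹) * ‖h t‖ₑ ^ 2 ≠ ∞)
    (h0 : ∀ t, |t| < 2 → h t = 0) (hφ : AuxGood φ φ' B) (hη : AuxGood η η' B)
    (hrel : ∀ y : ℝ, η y = φ y + y * φ' y) {x δ L : ℝ} (hx : |x| ≤ 1) (hδ : 0 < δ) (hL : δ ≤ L)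
    (hL2 : L ≤ 2 * δ) (ξ : ℝ) :
    ‖𝓕 (fun t => h t * ((L : ℂ) * auxD φ x L t)) ξ‖ₑ ^ 2 ≤
      2 * ‖𝓕 (fun t => h t * ((δ : ℂ) * auxD φ x δ t)) ξ‖ₑ ^ 2
      + 2 * (ENNReal.ofReal δ * ∫⁻ s in Ioc δ (2 * δ), ‖𝓕 (fun t => h t * auxD η x s t) ξ‖ₑ ^ 2) := by
  rw [auxF_eq hm hW h0 hφ hη hrel hx hδ hL ξ]
  refine (aux_sq_add _ _).trans ?_
  gcongr
  have meas : AEMeasurable (fun s => ‖𝓕 (fun t => h t * auxD η x s t) ξ‖ₑ)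
      (volume.restrict (Ioc δ (2 * δ))) := by
    have := (auxF_int hm hW h0 hη hx hδ ξ (L := 2 * δ)).integral_prod_left.1.enorm
    simpa only [aux_fourier_e2pi] using this
  have c := aux_CS _ meas
  rw [Measure.restrict_apply_univ, Real.volume_Ioc, show 2 * δ - δ = δ by ring] at c
  refine le_trans ?_ c
  gcongr
  refine (enorm_integral_le_lintegral_enorm _).trans ?_
  exact lintegral_mono_set (Ioc_subset_Ioc_right hL2)

theorem aux_group {ι : Type*} (S : Finset ι) (a L : ι → ℝ) (δ : ℝ) (hδ : 0 < δ)
    (hL : ∀ m ∈ S, δ ≤ L m ∧ L m ≤ 2 * δ)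
    (hd : ∀ m ∈ S, ∀ m' ∈ S, m ≠ m' → Disjoint (Ioc (a m) (a m + δ)) (Ioc (a m') (a m' + δ)))
    {h : ℝ → ℂ} (hm : AEStronglyMeasurable h)
    (hW : ∫⁻ t, ENNReal.ofReal (((1 + |t|) ^ 2)⁻¹) * ‖h t‖ₑ ^ 2 ≠ ∞)
    (h0 : ∀ t, |t| < 2 → h t = 0) (hφ : AuxGood φ φ' B) (hη : AuxGood η η' B)
    (hrel : ∀ y : ℝ, η y = φ y + y * φ' y) {x : ℝ} (hx : |x| ≤ 1) :
    ∑ m ∈ S, ‖𝓕 (fun t => h t * ((L m : ℂ) * auxD φ x (L m) t)) (a m)‖ₑ ^ 2 ≤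
      4 * (ENNReal.ofReal (1310720 * B ^ 2 * min δ δ⁻¹) *
        ∫⁻ t, ENNReal.ofReal (((1 + |t|) ^ 2)⁻¹) * ‖h t‖ₑ ^ 2) := by
  have hB := hφ.nonneg
  set W := ∫⁻ t, ENNReal.ofReal (((1 + |t|) ^ 2)⁻¹) * ‖h t‖ₑ ^ 2 with hWdef
  have hμ : 0 < min δ 1 := lt_min hδ one_pos
  have hmin : 0 < min δ δ⁻¹ := lt_min hδ (inv_pos.2 hδ)
  set A := 1310720 * B ^ 2 * min δ δ⁻¹ with hA
  have hA0 : 0 ≤ A := by positivity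
  have s1 : ∑ m ∈ S, ‖𝓕 (fun t => h t * ((δ : ℂ) * auxD φ x δ t)) (a m)‖ₑ ^ 2 ≤ ENNReal.ofReal A * W := by
    refine aux_group_sieve S a δ hδ hd hm hW h0
      (aestronglyMeasurable_const.mul (auxD_aesm hφ.cont x δ)) (M := δ * (16 * B / (min δ 1) ^ 3))
      (by positivity) (fun t ht => auxκ_bound hφ hx ht hδ) hA0 (fun t ht => ?_)
    refine aux_pointwise hδ le_rfl (by linarith) ht hB (norm_nonneg _) ?_
    change ‖(δ : ℂ) * auxD φ x δ t‖ ≤ _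
    rw [norm_mul, Complex.norm_real, Real.norm_of_nonneg hδ.le]
    gcongr
    exact auxD_bound hφ hx ht hδ
  have s2 : ∀ s ∈ Ioc δ (2 * δ), ∑ m ∈ S, ‖𝓕 (fun t => h t * auxD η x s t) (a m)‖ₑ ^ 2 ≤
      ENNReal.ofReal (A / δ ^ 2) * W := by
    intro s hs
    refine aux_group_sieve S a δ hδ hd hm hW h0 (auxD_aesm hη.cont x s) (M := 16 * B / (min δ 1) ^ 3)
      (by positivity) (fun t ht => auxD_bound' hη hx ht hδ hs.1.le) (by positivity) (fun t ht => ?_)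
    have := aux_pointwise hδ hs.1.le hs.2 ht hB (d := s * ‖auxD η x s t‖)
      (by have := hδ.trans hs.1; positivity) (by
        have := hδ.trans hs.1
        gcongr
        exact auxD_bound hη hx ht this)
    rw [div_mul_eq_mul_div, le_div_iff₀ (by positivity)]
    refine le_trans ?_ this
    have hs1 := hs.1.le
    calc _ = (2 / δ + 8 * π ^ 2 * δ * t ^ 2) * (δ * ‖auxD η x s t‖) ^ 2 := by ring
      _ ≤ _ := by gcongr
  have meas : ∀ m ∈ S, AEMeasurable (fun s => ‖𝓕 (fun t => h t * auxD η x s t) (a m)‖ₑ ^ 2)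
      (volume.restrict (Ioc δ (2 * δ))) := by
    intro m _
    have := (auxF_int hm hW h0 hη hx hδ (a m) (L := 2 * δ)).integral_prod_left.1.enorm.pow_const 2
    simpa only [aux_fourier_e2pi] using this
  have s3 : ∑ m ∈ S, ∫⁻ s in Ioc δ (2 * δ), ‖𝓕 (fun t => h t * auxD η x s t) (a m)‖ₑ ^ 2 ≤
      ENNReal.ofReal (A / δ ^ 2) * W * ENNReal.ofReal δ := by
    rw [← lintegral_finsetSum' _ meas]
    refine (setLIntegral_mono' measurableSet_Ioc s2).trans ?_
    rw [setLIntegral_const, Real.volume_Ioc, show 2 * δ - δ = δ by ring]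
  calc _ ≤ ∑ m ∈ S, (2 * ‖𝓕 (fun t => h t * ((δ : ℂ) * auxD φ x δ t)) (a m)‖ₑ ^ 2
      + 2 * (ENNReal.ofReal δ * ∫⁻ s in Ioc δ (2 * δ), ‖𝓕 (fun t => h t * auxD η x s t) (a m)‖ₑ ^ 2)) :=
        Finset.sum_le_sum fun m hmS =>
          auxF_sq hm hW h0 hφ hη hrel hx hδ (hL m hmS).1 (hL m hmS).2 (a m)
    _ ≤ 2 * (ENNReal.ofReal A * W) + 2 * (ENNReal.ofReal δ * (ENNReal.ofReal (A / δ ^ 2) * W * ENNReal.ofReal δ)) := by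
        rw [Finset.sum_add_distrib, ← Finset.mul_sum, ← Finset.mul_sum, ← Finset.mul_sum]
        gcongr
    _ = 2 * (ENNReal.ofReal A * W) + 2 * ((ENNReal.ofReal δ * ENNReal.ofReal (A / δ ^ 2) * ENNReal.ofReal δ) * W) := by ring
    _ = 2 * (ENNReal.ofReal A * W) + 2 * (ENNReal.ofReal A * W) := by
        rw [← ENNReal.ofReal_mul hδ.le, ← ENNReal.ofReal_mul (by positivity)]
        congr 4
        field_simp
    _ = _ := by ring

theorem aux_summable : Summable (fun j : ℤ => (1 / 2 : ℝ) ^ j.natAbs) := by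
  refine Summable.of_nat_of_neg ?_ ?_
  · simpa using summable_geometric_two
  · simpa using summable_geometric_two

theorem aux_min_le (j : ℤ) : min ((2 : ℝ) ^ j) ((2 : ℝ) ^ j)⁻¹ ≤ (1 / 2 : ℝ) ^ j.natAbs := by
  obtain ⟨n, rfl | rfl⟩ := j.eq_nat_or_neg
  · refine (min_le_right _ _).trans ?_
    simp
  · refine (min_le_left _ _).trans ?_
    simp

theorem aux_far {N : ℕ} {a b : Fin N → ℝ} (hab : Admissible a b)
    {h : ℝ → ℂ} (hm : AEStronglyMeasurable h)
    (hW : ∫⁻ t, ENNReal.ofReal (((1 + |t|) ^ 2)⁻¹) * ‖h t‖ₑ ^ 2 ≠ ∞)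
    (h0 : ∀ t, |t| < 2 → h t = 0) (hφ : AuxGood φ φ' B) (hη : AuxGood η η' B)
    (hrel : ∀ y : ℝ, η y = φ y + y * φ' y) {x : ℝ} (hx : |x| ≤ 1) :
    ∑ m, ‖𝓕 (fun t => h t * (((b m - a m : ℝ) : ℂ) * auxD φ x (b m - a m) t)) (a m)‖ₑ ^ 2 ≤
      ENNReal.ofReal (4 * (1310720 * B ^ 2 * ∑' j : ℤ, (1 / 2 : ℝ) ^ j.natAbs)) *
        ∫⁻ t, ENNReal.ofReal (((1 + |t|) ^ 2)⁻¹) * ‖h t‖ₑ ^ 2 := by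
  classical
  set W := ∫⁻ t, ENNReal.ofReal (((1 + |t|) ^ 2)⁻¹) * ‖h t‖ₑ ^ 2 with hWdef
  set j : Fin N → ℤ := fun m => Int.log 2 (b m - a m) with hj
  have hpos : ∀ m, 0 < b m - a m := fun m => sub_pos.2 (hab.1 m)
  have hlow : ∀ m, (2 : ℝ) ^ j m ≤ b m - a m := fun m => by
    simpa using Int.zpow_log_le_self (b := 2) (by norm_num) (hpos m)
  have hup : ∀ m, b m - a m ≤ 2 * (2 : ℝ) ^ j m := fun m => by
    have := (Int.lt_zpow_succ_log_self (b := 2) (by norm_num) (b m - a m)).le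
    rw [zpow_add_one₀ (by norm_num), mul_comm] at this
    simpa using this
  rw [← Finset.sum_fiberwise_of_maps_to (s := Finset.univ) (t := Finset.univ.image j) (g := j)
    (fun m _ => Finset.mem_image_of_mem _ (Finset.mem_univ m))]
  have step : ∀ i ∈ Finset.univ.image j, ∑ m with j m = i,
      ‖𝓕 (fun t => h t * (((b m - a m : ℝ) : ℂ) * auxD φ x (b m - a m) t)) (a m)‖ₑ ^ 2 ≤
      ENNReal.ofReal (4 * (1310720 * B ^ 2 * (1 / 2 : ℝ) ^ i.natAbs)) * W := by
    intro i _
    have hδ : (0 : ℝ) < 2 ^ i := by positivity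
    refine (aux_group _ a (fun m => b m - a m) ((2 : ℝ) ^ i) hδ ?_ ?_ hm hW h0 hφ hη hrel hx).trans ?_
    · intro m hmi
      obtain rfl : j m = i := (Finset.mem_filter.1 hmi).2
      exact ⟨hlow m, hup m⟩
    · intro m hmi m' hmi' hne
      have e1 : j m = i := (Finset.mem_filter.1 hmi).2
      have e2 : j m' = i := (Finset.mem_filter.1 hmi').2
      have l1 := hlow m
      have l2 := hlow m'
      rw [e1] at l1
      rw [e2] at l2
      refine (hab.2.2 m m' hne).mono ?_ ?_
      · exact Ioc_subset_Icc_self.trans (Icc_subset_Icc_right (by linarith))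
      · exact Ioc_subset_Icc_self.trans (Icc_subset_Icc_right (by linarith))
    · rw [ENNReal.ofReal_mul (p := 4) (by norm_num), ENNReal.ofReal_ofNat, mul_assoc (4 : ℝ≥0∞)]
      gcongr
      exact aux_min_le i
  refine (Finset.sum_le_sum step).trans ?_
  rw [← Finset.sum_mul, ← ENNReal.ofReal_sum_of_nonneg (fun i _ => by positivity)]
  gcongr
  rw [← Finset.mul_sum, ← Finset.mul_sum]
  gcongr
  exact aux_summable.sum_le_tsum _ (fun i _ => by positivity)

end far

theorem aux_schwartz (φ : SchwartzMap ℝ ℂ) : ∃ (φ' η η' : ℝ → ℂ) (B : ℝ),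
    AuxGood φ φ' B ∧ AuxGood η η' B ∧ ∀ y : ℝ, η y = φ y + y * φ' y := by
  have hB : ∀ n : ℕ, ∃ C, 0 ≤ C ∧ ∀ y : ℝ, (1 + |y|) ^ 4 * ‖iteratedDeriv n φ y‖ ≤ C := by
    intro n
    have h := fun y => SchwartzMap.one_add_le_sup_seminorm_apply (𝕜 := ℝ) (m := (4, n)) (le_refl 4) (le_refl n) φ y
    refine ⟨_, (by positivity : 0 ≤ (2:ℝ) ^ 4 * ((Finset.Iic (4, n)).sup fun m => SchwartzMap.seminorm ℝ m.1 m.2) φ), fun y => ?_⟩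
    have := h y
    rwa [norm_iteratedFDeriv_eq_norm_iteratedDeriv, Real.norm_eq_abs] at this
  obtain ⟨C0, hC0, h0⟩ := hB 0
  obtain ⟨C1, hC1, h1⟩ := hB 1
  obtain ⟨C2, hC2, h2⟩ := hB 2
  have hsm := φ.smooth 2
  have d1 : ∀ y, HasDerivAt φ (deriv φ y) y := fun y =>
    ((hsm.differentiable (by norm_num)) y).hasDerivAt
  have hd : ContDiff ℝ 1 (deriv φ) := by
    have : ContDiff ℝ (1 + 1) φ := by norm_num; exact hsm
    exact (contDiff_succ_iff_deriv.1 this).2.2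
  have d2 : ∀ y, HasDerivAt (deriv φ) (deriv (deriv φ) y) y := fun y =>
    ((hd.differentiable (by norm_num)) y).hasDerivAt
  have e0 : ∀ y : ℝ, ‖φ y‖ * (1 + |y|) ^ 4 ≤ C0 := fun y => by
    have := h0 y; rw [mul_comm]; simpa using this
  have e1 : ∀ y : ℝ, ‖deriv φ y‖ * (1 + |y|) ^ 4 ≤ C1 := fun y => by
    have := h1 y; rw [mul_comm]; simpa [iteratedDeriv_one] using this
  have e2 : ∀ y : ℝ, ‖deriv (deriv φ) y‖ * (1 + |y|) ^ 4 ≤ C2 := fun y => by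
    have := h2 y; rw [mul_comm]; simpa [iteratedDeriv_succ, iteratedDeriv_one] using this
  have gen : ∀ (y : ℝ) (z : ℂ) (C : ℝ), ‖z‖ * (1 + |y|) ^ 4 ≤ C →
      ‖z‖ ≤ C / (1 + |y|) ^ 3 ∧ ‖(y : ℂ) * z‖ ≤ C / (1 + |y|) ^ 3 := by
    intro y z C hz
    have p : 1 ≤ 1 + |y| := by linarith [abs_nonneg y]
    have p3 : 0 < (1 + |y|) ^ 3 := by positivity
    rw [le_div_iff₀ p3, le_div_iff₀ p3, norm_mul, Complex.norm_real, Real.norm_eq_abs]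
    constructor
    · refine le_trans ?_ hz
      gcongr
      · norm_num
    · refine le_trans ?_ hz
      calc |y| * ‖z‖ * (1 + |y|) ^ 3 ≤ (1 + |y|) * ‖z‖ * (1 + |y|) ^ 3 := by
            gcongr; linarith
        _ = _ := by ring
  refine ⟨deriv φ, fun y => φ y + y * deriv φ y, fun y => 2 * deriv φ y + y * deriv (deriv φ) y,
    C0 + 2 * C1 + C2, ⟨d1, fun y => ⟨?_, ?_⟩⟩, ⟨fun y => ?_, fun y => ⟨?_, ?_⟩⟩, fun y => rfl⟩
  · refine (gen y _ _ (e0 y)).1.trans ?_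
    gcongr; linarith
  · refine (gen y _ _ (e1 y)).1.trans ?_
    gcongr; linarith
  · have hid : HasDerivAt (fun s : ℝ => (s : ℂ)) 1 y := Complex.ofRealCLM.hasDerivAt
    refine ((d1 y).add (hid.mul (d2 y))).congr_deriv ?_
    ring
  · refine (norm_add_le _ _).trans ((add_le_add (gen y _ _ (e0 y)).1 (gen y _ _ (e1 y)).2).trans ?_)
    rw [← add_div]
    exact div_le_div_of_nonneg_right (by linarith) (by positivity)
  · refine (norm_add_le _ _).trans ?_
    have := (gen y _ _ (e1 y)).1
    have := (gen y _ _ (e2 y)).2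
    rw [norm_mul, Complex.norm_ofNat]
    calc _ ≤ 2 * (C1 / (1 + |y|) ^ 3) + C2 / (1 + |y|) ^ 3 := by gcongr
      _ = (2 * C1 + C2) / (1 + |y|) ^ 3 := by ring
      _ ≤ _ := by gcongr; linarith



theorem aux_far_int {φ φ' : ℝ → ℂ} {B : ℝ} (hφ : AuxGood φ φ' B) {h : ℝ → ℂ}
    (hm : AEStronglyMeasurable h)
    (hW : ∫⁻ t, ENNReal.ofReal (((1 + |t|) ^ 2)⁻¹) * ‖h t‖ₑ ^ 2 ≠ ∞)
    (h0 : ∀ t, |t| < 2 → h t = 0) {x L : ℝ} (hx : |x| ≤ 1) (hL : 0 < L) :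
    Integrable (fun t => h t * ((L : ℂ) * φ (L * (x - t)))) := by
  have hB := hφ.nonneg
  have hμ : 0 < min L 1 := lt_min hL one_pos
  have hc : Continuous (fun t : ℝ => (L : ℂ) * φ (L * (x - t))) := by
    have := hφ.cont
    fun_prop
  refine (aux_four hm hW h0 hc.aestronglyMeasurable
    (M := L * (B * 8 / (min L 1) ^ 3)) (by positivity) (fun t ht => ?_)).1
  rw [norm_mul, Complex.norm_real, Real.norm_of_nonneg hL.le, mul_div_assoc]
  refine mul_le_mul_of_nonneg_left ((hφ.2 _).1.trans ?_) hL.le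
  have h1 : min L 1 * (1 + |t|) / 2 ≤ 1 + |L * (x - t)| := by
    have e1 := min_le_left L 1
    have e2 := min_le_right L 1
    have h2 : |t| / 2 ≤ |x - t| := by
      have := abs_sub_abs_le_abs_sub t x
      rw [abs_sub_comm] at this
      linarith
    rw [abs_mul, abs_of_pos hL]
    nlinarith [abs_nonneg t, mul_le_mul_of_nonneg_right e1 (abs_nonneg t),
      mul_le_mul_of_nonneg_left h2 hL.le]
  calc _ ≤ B / (min L 1 * (1 + |t|) / 2) ^ 3 := by gcongr
    _ = _ := by field_simp; norm_num

theorem aux_rot_far (φ : ℝ → ℂ) (a b : ℝ) (h : ℝ → ℂ) (x : ℝ) :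
    rotConv φ a b h x =
      ∫ t, e2pi (-(a * t)) * (h t * (((b - a : ℝ) : ℂ) * φ ((b - a) * (x - t)))) := by
  rw [rotConv, conv, ← integral_const_mul]
  congr with t
  rw [phim, show -(a * t) = -(a * x) + a * (x - t) by ring, aux_e2pi_add]
  ring

theorem aux_rot_diff {φ φ' : ℝ → ℂ} {B : ℝ} (hφ : AuxGood φ φ' B) {h : ℝ → ℂ}
    (hm : AEStronglyMeasurable h)
    (hW : ∫⁻ t, ENNReal.ofReal (((1 + |t|) ^ 2)⁻¹) * ‖h t‖ₑ ^ 2 ≠ ∞)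
    (h0 : ∀ t, |t| < 2 → h t = 0) {x a b : ℝ} (hx : |x| ≤ 1) (hab : a < b) :
    rotConv φ a b h x - rotConv φ a b h 0 =
      𝓕 (fun t => h t * (((b - a : ℝ) : ℂ) * auxD φ x (b - a) t)) a := by
  have I : ∀ x : ℝ, |x| ≤ 1 → Integrable (fun t => e2pi (-(a * t)) *
      (h t * (((b - a : ℝ) : ℂ) * φ ((b - a) * (x - t))))) := fun x hx =>
    (aux_far_int hφ hm hW h0 hx (sub_pos.2 hab)).bdd_mul (c := 1)
      (aux_e2pi_cont.comp (by fun_prop)).aestronglyMeasurable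
      (Filter.Eventually.of_forall fun t => (aux_norm_e2pi _).le)
  rw [aux_rot_far, aux_rot_far, ← integral_sub (I x hx) (I 0 (by simp)), aux_fourier_e2pi]
  congr with t
  rw [auxD]
  ring

theorem aux_phim_integral (φ : SchwartzMap ℝ ℂ) (hφ : Function.support (𝓕 ⇑φ) ⊆ Set.Ioo 0 1)
    {a b : ℝ} (hab : a < b) (h0 : (0 : ℝ) ∉ Ioo a b) : ∫ t, phim φ a b t = 0 := by
  have h1 := aux_fourier_phim φ hab 0
  rw [aux_fourier_e2pi] at h1
  have h2 : 𝓕 (φ : ℝ → ℂ) ((0 - a) / (b - a)) = 0 := by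
    by_contra hne
    have := hφ (mem_support.2 hne)
    have hL : 0 < b - a := sub_pos.2 hab
    rw [mem_Ioo, div_pos_iff_of_pos_right hL, div_lt_one hL] at this
    exact h0 ⟨by linarith [this.1], by linarith [this.2]⟩
  rw [h2] at h1
  rw [← h1]
  congr with t
  simp [e2pi]

theorem aux_rot_split (φ : SchwartzMap ℝ ℂ) (hφ : Function.support (𝓕 ⇑φ) ⊆ Set.Ioo 0 1)
    {φ' : ℝ → ℂ} {B : ℝ} (hg : AuxGood φ φ' B) {f f1 f2 : ℝ → ℂ} {c : ℂ}
    (hf : ∀ t, f t = c + f1 t + f2 t) (hf1 : Integrable f1)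
    (hm : AEStronglyMeasurable f2)
    (hW : ∫⁻ t, ENNReal.ofReal (((1 + |t|) ^ 2)⁻¹) * ‖f2 t‖ₑ ^ 2 ≠ ∞)
    (h0 : ∀ t, |t| < 2 → f2 t = 0) {x a b : ℝ} (hx : |x| ≤ 1) (hab : a < b)
    (hab0 : (0 : ℝ) ∉ Ioo a b) :
    rotConv φ a b f x = e2pi (-(a * x)) * conv f1 (phim φ a b) x + rotConv φ a b f2 x := by
  have hB := hg.nonneg
  have hL : 0 < b - a := sub_pos.2 hab
  have ψc : Continuous (fun t => phim φ a b (x - t)) := (aux_phim_cont φ a b).comp (by fun_prop)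
  have i0 : Integrable (fun t => c * phim φ a b (x - t)) :=
    ((aux_phim_int φ hab).comp_sub_left x).const_mul c
  have hbd : ∀ y, ‖phim φ a b y‖ ≤ (b - a) * B := by
    intro y
    rw [phim, norm_mul, norm_mul, aux_norm_e2pi, mul_one, Complex.norm_real, Real.norm_of_nonneg hL.le]
    gcongr
    refine (hg.2 _).1.trans (div_le_self hB ?_)
    exact one_le_pow₀ (by linarith [abs_nonneg ((b - a) * y)])
  have i1 : Integrable (fun t => f1 t * phim φ a b (x - t)) :=
    hf1.mul_bdd (c := (b - a) * B) ψc.aestronglyMeasurable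
      (Filter.Eventually.of_forall fun t => hbd _)
  have i2 : Integrable (fun t => f2 t * phim φ a b (x - t)) := by
    have := (aux_far_int hg hm hW h0 hx hL).bdd_mul (c := 1) (f := fun t => e2pi (a * (x - t)))
      (aux_e2pi_cont.comp (by fun_prop)).aestronglyMeasurable
      (Filter.Eventually.of_forall fun t => (aux_norm_e2pi _).le)
    refine this.congr (Filter.Eventually.of_forall fun t => ?_)
    simp only [phim]
    ring
  have : conv f (phim φ a b) x = conv f1 (phim φ a b) x + conv f2 (phim φ a b) x := by
    have e : (fun t => f t * phim φ a b (x - t)) = fun t => c * phim φ a b (x - t) +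
        (f1 t * phim φ a b (x - t) + f2 t * phim φ a b (x - t)) := by
      ext t; rw [hf]; ring
    have i12 : Integrable (fun t => f1 t * phim φ a b (x - t) + f2 t * phim φ a b (x - t)) :=
      i1.add i2
    rw [conv, e, integral_add i0 i12, integral_add i1 i2, integral_const_mul,
      integral_sub_left_eq_self (phim φ a b) volume x, aux_phim_integral φ hφ hab hab0]
    simp [conv]
  rw [rotConv, rotConv, this, mul_add]

theorem aux_rot_aesm (φ : SchwartzMap ℝ ℂ) {f : ℝ → ℂ} (hf : AEStronglyMeasurable f) (a b : ℝ) :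
    AEStronglyMeasurable (rotConv φ a b f) := by
  have : AEStronglyMeasurable (fun x => ∫ t, f t * phim φ a b (x - t)) :=
    AEStronglyMeasurable.integral_prod_right' (μ := volume) (ν := volume)
      (f := fun p : ℝ × ℝ => f p.2 * phim φ a b (p.1 - p.2))
      (hf.comp_snd.mul ((aux_phim_cont φ a b).comp (by fun_prop)).aestronglyMeasurable)
  exact ((aux_e2pi_cont.comp (by fun_prop : Continuous fun x => -(a * x)))).aestronglyMeasurable.mul this

theorem aux_main (φ : SchwartzMap ℝ ℂ) (hφ : Function.support (𝓕 ⇑φ) ⊆ Set.Ioo 0 1) :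
    ∃ C : ℝ, 0 ≤ C ∧ ∀ (N : ℕ) (a b : Fin N → ℝ), Admissible a b →
      ∀ (f : ℝ → ℂ), LocallyIntegrable f → ∀ K : ℝ, 0 ≤ K →
      (∀ u v, u < v → (v - u)⁻¹ * ∫ r in u..v, ‖f r - auxAv f u v‖ ≤ K) →
      ∃ cm : Fin N → ℂ, ∑ m, ∫⁻ x in Ioc (-1 : ℝ) 1, ‖rotConv φ (a m) (b m) f x - cm m‖ₑ ^ 2 ≤
        ENNReal.ofReal (C * K ^ 2) := by
  obtain ⟨φ', η, η', B, hg, hη, hrel⟩ := aux_schwartz φ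
  obtain ⟨Cw, hCw, hw⟩ := aux_weighted
  have hB := hg.nonneg
  set B1 := ∫ t, ‖φ t‖ with hB1
  have hB1' : ∀ ξ, ‖𝓕 (φ : ℝ → ℂ) ξ‖ ≤ B1 := fun ξ => by
    rw [aux_fourier_e2pi]
    refine (norm_integral_le_integral_norm _).trans (le_of_eq ?_)
    simp only [norm_mul, aux_norm_e2pi, one_mul, hB1]
  set Cf := 4 * (1310720 * B ^ 2 * ∑' j : ℤ, (1 / 2 : ℝ) ^ j.natAbs) with hCf
  have hCf0 : 0 ≤ Cf := by
    have : 0 ≤ ∑' j : ℤ, (1 / 2 : ℝ) ^ j.natAbs := tsum_nonneg fun j => by positivity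
    positivity
  refine ⟨2 * (B1 ^ 2 * (176 * 4)) + 4 * (Cf * Cw), by positivity, ?_⟩
  intro N a b hab f hf K hK hb
  set c := auxAv f (-2) 2 with hc
  set f1 : ℝ → ℂ := (Ioc (-2 : ℝ) 2).indicator (fun t => f t - c) with hf1
  set f2 : ℝ → ℂ := (Ioc (-2 : ℝ) 2)ᶜ.indicator (fun t => f t - c) with hf2
  have hsum : ∀ t, f t = c + f1 t + f2 t := by
    intro t
    have := congrFun (indicator_self_add_compl (Ioc (-2 : ℝ) 2) (fun t => f t - c)) t
    simp only [Pi.add_apply] at this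
    rw [add_assoc, this]; ring
  have hfc : AEStronglyMeasurable (fun t => f t - c) :=
    hf.aestronglyMeasurable.sub aestronglyMeasurable_const
  have m1 : AEStronglyMeasurable f1 := hfc.indicator measurableSet_Ioc
  have m2 : AEStronglyMeasurable f2 := hfc.indicator measurableSet_Ioc.compl
  have h0 : ∀ t, |t| < 2 → f2 t = 0 := by
    intro t ht
    rw [abs_lt] at ht
    have hmem : t ∉ (Ioc (-2 : ℝ) 2)ᶜ := not_not.2 ⟨ht.1, ht.2.le⟩
    exact indicator_of_notMem hmem _
  have n1 : ∫⁻ x, ‖f1 x‖ₑ ^ 2 ≤ ENNReal.ofReal (176 * K ^ 2 * 4) := by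
    have := aux_JN hf hK hb (u := -2) (v := 2) (by norm_num)
    rw [show (2 : ℝ) - -2 = 4 by norm_num, ← lintegral_indicator measurableSet_Ioc] at this
    refine le_trans (lintegral_mono fun x => ?_) this
    rw [hf1]
    by_cases hx : x ∈ Ioc (-2 : ℝ) 2 <;> simp [hx, hc]
  have L2 : MemLp f1 2 := by
    refine ⟨m1, ?_⟩
    rw [eLpNorm_lt_top_iff_lintegral_rpow_enorm_lt_top (by norm_num) (by norm_num)]
    simpa using n1.trans_lt ENNReal.ofReal_lt_top
  have L1 : Integrable f1 := by
    rw [hf1, integrable_indicator_iff measurableSet_Ioc]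
    have h1 : IntegrableOn f (Ioc (-2 : ℝ) 2) :=
      (hf.integrableOn_isCompact isCompact_Icc).mono_set Ioc_subset_Icc_self
    exact h1.sub (integrableOn_const (by simp))
  set W := ∫⁻ t, ENNReal.ofReal (((1 + |t|) ^ 2)⁻¹) * ‖f2 t‖ₑ ^ 2 with hWd
  have nW : W ≤ ENNReal.ofReal (Cw * K ^ 2) := by
    refine le_trans (lintegral_mono fun t => ?_) (hw f hf K hK hb)
    dsimp only
    gcongr
    rw [hf2]
    by_cases hx : t ∈ (Ioc (-2 : ℝ) 2)ᶜ
    · rw [indicator_of_mem hx]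
    · rw [indicator_of_notMem hx]; simp
  have hW : W ≠ ∞ := (nW.trans_lt ENNReal.ofReal_lt_top).ne
  refine ⟨fun m => rotConv φ (a m) (b m) f2 0, ?_⟩
  have hnear := aux_near φ hφ hB1' hab L1 L2
  have hpt : ∀ m, ∀ x ∈ Ioc (-1 : ℝ) 1, ‖rotConv φ (a m) (b m) f x - rotConv φ (a m) (b m) f2 0‖ₑ ^ 2 ≤
      2 * ‖conv f1 (phim φ (a m) (b m)) x‖ₑ ^ 2 +
      2 * ‖rotConv φ (a m) (b m) f2 x - rotConv φ (a m) (b m) f2 0‖ₑ ^ 2 := by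
    intro m x hx
    have hx1 : |x| ≤ 1 := abs_le.2 ⟨hx.1.le, hx.2⟩
    rw [aux_rot_split φ hφ hg hsum L1 m2 hW h0 hx1 (hab.1 m) (hab.2.1 m), add_sub_assoc]
    refine (aux_sq_add _ _).trans (le_of_eq ?_)
    rw [enorm_mul, ← ofReal_norm (e2pi _), aux_norm_e2pi, ENNReal.ofReal_one, one_mul]
  have hfar : ∀ x ∈ Ioc (-1 : ℝ) 1,
      ∑ m, ‖rotConv φ (a m) (b m) f2 x - rotConv φ (a m) (b m) f2 0‖ₑ ^ 2 ≤ ENNReal.ofReal (Cf * (Cw * K ^ 2)) := by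
    intro x hx
    have hx1 : |x| ≤ 1 := abs_le.2 ⟨hx.1.le, hx.2⟩
    rw [ENNReal.ofReal_mul hCf0]
    refine le_trans ?_ (mul_le_mul_right nW _)
    refine le_trans (le_of_eq ?_) (aux_far hab m2 hW h0 hg hη hrel hx1)
    refine Finset.sum_congr rfl fun m _ => ?_
    rw [aux_rot_diff hg m2 hW h0 hx1 (hab.1 m)]
  have mc : ∀ m, AEMeasurable (fun x => 2 * ‖conv f1 (phim φ (a m) (b m)) x‖ₑ ^ 2)
      (volume.restrict (Ioc (-1 : ℝ) 1)) := by
    intro m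
    have : AEStronglyMeasurable (conv f1 (phim φ (a m) (b m))) := by
      rw [aux_conv_eq]
      exact (L1.integrable_convolution (ContinuousLinearMap.mul ℂ ℂ) (aux_phim_int φ (hab.1 m))).1
    exact ((this.restrict.enorm.pow_const 2).const_mul 2)
  have mf : ∀ m, AEMeasurable (fun x => ‖rotConv φ (a m) (b m) f2 x - rotConv φ (a m) (b m) f2 0‖ₑ ^ 2)
      (volume.restrict (Ioc (-1 : ℝ) 1)) := by
    intro m
    exact (((aux_rot_aesm φ m2 (a m) (b m)).sub aestronglyMeasurable_const).restrict.enorm.pow_const 2)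
  calc _ ≤ ∑ m, ∫⁻ x in Ioc (-1 : ℝ) 1, (2 * ‖conv f1 (phim φ (a m) (b m)) x‖ₑ ^ 2 +
      2 * ‖rotConv φ (a m) (b m) f2 x - rotConv φ (a m) (b m) f2 0‖ₑ ^ 2) :=
        Finset.sum_le_sum fun m _ => setLIntegral_mono' measurableSet_Ioc (hpt m)
    _ = 2 * ∑ m, (∫⁻ x in Ioc (-1 : ℝ) 1, ‖conv f1 (phim φ (a m) (b m)) x‖ₑ ^ 2) +
        2 * ∫⁻ x in Ioc (-1 : ℝ) 1, ∑ m, ‖rotConv φ (a m) (b m) f2 x - rotConv φ (a m) (b m) f2 0‖ₑ ^ 2 := by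
        rw [lintegral_finsetSum' _ (fun m _ => mf m), Finset.mul_sum, Finset.mul_sum,
          ← Finset.sum_add_distrib]
        refine Finset.sum_congr rfl fun m _ => ?_
        rw [lintegral_add_left' (mc m), lintegral_const_mul' _ _ (by simp),
          lintegral_const_mul' _ _ (by simp)]
    _ ≤ 2 * (ENNReal.ofReal (B1 ^ 2) * ENNReal.ofReal (176 * K ^ 2 * 4)) +
        2 * (ENNReal.ofReal (Cf * (Cw * K ^ 2)) * ENNReal.ofReal 2) := by
        gcongr
        · refine le_trans (Finset.sum_le_sum fun m _ => setLIntegral_le_lintegral _ _) (hnear.trans ?_)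
          gcongr
        · refine (setLIntegral_mono' measurableSet_Ioc hfar).trans ?_
          rw [setLIntegral_const, Real.volume_Ioc]
          norm_num
    _ = _ := by
        rw [← ENNReal.ofReal_mul (by positivity), ← ENNReal.ofReal_mul (by positivity),
          ← ENNReal.ofReal_ofNat 2, ← ENNReal.ofReal_mul (by positivity),
          ← ENNReal.ofReal_mul (by positivity), ← ENNReal.ofReal_add (by positivity) (by positivity)]
        congr 1
        ring


theorem aux_avg {N : ℕ} {G : Fin N → ℝ → ℂ} (hG : ∀ m, AEStronglyMeasurable (G m)) (cm : Fin N → ℂ)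
    {D : ℝ} (hD : 0 ≤ D)
    (h : ∑ m, ∫⁻ x in Ioc (-1 : ℝ) 1, ‖G m x - cm m‖ₑ ^ 2 ≤ ENNReal.ofReal D) :
    (∫ x in (-1 : ℝ)..1, (∑ m, ‖G m x - (2 : ℝ)⁻¹ • ∫ r in (-1 : ℝ)..1, G m r‖ ^ 2) ^ (1 / 2 : ℝ)) ^ 2
      ≤ 8 * D := by
  set μ : Measure ℝ := volume.restrict (Ioc (-1 : ℝ) 1) with hμ
  have hμu : μ univ = 2 := by
    rw [hμ, Measure.restrict_apply_univ, Real.volume_Ioc]; norm_num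
  have : IsFiniteMeasure μ := ⟨by rw [hμu]; simp⟩
  have h11 : (-1 : ℝ) ≤ 1 := by norm_num
  simp only [intervalIntegral.integral_of_le h11]
  set A : Fin N → ℂ := fun m => (2 : ℝ)⁻¹ • ∫ r, G m r ∂μ with hA
  have hs : ∀ m, AEStronglyMeasurable (fun x => G m x - cm m) μ := fun m =>
    ((hG m).restrict.sub aestronglyMeasurable_const)
  have hfin : ∀ m, ∫⁻ x, ‖G m x - cm m‖ₑ ^ 2 ∂μ < ∞ := fun m =>
    ((Finset.single_le_sum (f := fun m => ∫⁻ x, ‖G m x - cm m‖ₑ ^ 2 ∂μ) (fun _ _ => zero_le)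
      (Finset.mem_univ m)).trans h).trans_lt ENNReal.ofReal_lt_top
  have hi : ∀ m, Integrable (fun x => G m x - cm m) μ := by
    intro m
    have : MemLp (fun x => G m x - cm m) 2 μ := by
      refine ⟨hs m, ?_⟩
      rw [eLpNorm_lt_top_iff_lintegral_rpow_enorm_lt_top (by norm_num) (by norm_num)]
      simpa using hfin m
    exact this.integrable (by norm_num)
  have hAm : ∀ m, 2 * ‖cm m - A m‖ₑ ^ 2 ≤ ∫⁻ x, ‖G m x - cm m‖ₑ ^ 2 ∂μ := by
    intro m
    have e : A m - cm m = (2 : ℝ)⁻¹ • ∫ x, (G m x - cm m) ∂μ := by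
      have hGi : Integrable (G m) μ := by
        have := (hi m).add (integrable_const (cm m))
        refine this.congr (Filter.Eventually.of_forall fun x => ?_)
        simp
      rw [integral_sub hGi (integrable_const _), integral_const, smul_sub, smul_smul, measureReal_def, hμu]
      simp [hA]
    have c := aux_CS μ (hs m).enorm
    rw [hμu] at c
    rw [← enorm_neg, neg_sub, e, enorm_smul, mul_pow, ← ofReal_norm ((2:ℝ)⁻¹),
      Real.norm_of_nonneg (by norm_num), ENNReal.ofReal_inv_of_pos (by norm_num), ENNReal.ofReal_ofNat]
    calc (2 : ℝ≥0∞) * (2⁻¹ ^ 2 * ‖∫ x, (G m x - cm m) ∂μ‖ₑ ^ 2)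
        ≤ 2 * (2⁻¹ ^ 2 * (2 * ∫⁻ x, ‖G m x - cm m‖ₑ ^ 2 ∂μ)) := by
          gcongr
          refine le_trans ?_ c
          gcongr
          exact enorm_integral_le_lintegral_enorm _
      _ = (2 * 2⁻¹) * (2 * 2⁻¹) * ∫⁻ x, ‖G m x - cm m‖ₑ ^ 2 ∂μ := by ring
      _ = _ := by rw [ENNReal.mul_inv_cancel (by simp) (by simp)]; simp
  have hms : ∀ m, AEStronglyMeasurable (fun x => G m x - A m) μ := fun m =>
    ((hG m).restrict.sub aestronglyMeasurable_const)
  have tot : ∫⁻ x, ∑ m, ‖G m x - A m‖ₑ ^ 2 ∂μ ≤ 4 * ENNReal.ofReal D := by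
    rw [lintegral_finsetSum' _ (fun m _ => (hms m).enorm.pow_const 2)]
    refine le_trans ?_ (mul_le_mul_right h 4)
    rw [Finset.mul_sum]
    refine Finset.sum_le_sum fun m _ => ?_
    calc ∫⁻ x, ‖G m x - A m‖ₑ ^ 2 ∂μ
        ≤ ∫⁻ x, (2 * ‖G m x - cm m‖ₑ ^ 2 + 2 * ‖cm m - A m‖ₑ ^ 2) ∂μ := by
          refine lintegral_mono fun x => ?_
          have := aux_sq_add (G m x - cm m) (cm m - A m)
          rwa [sub_add_sub_cancel] at this
      _ = 2 * (∫⁻ x, ‖G m x - cm m‖ₑ ^ 2 ∂μ) + (2 * ‖cm m - A m‖ₑ ^ 2) * 2 := by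
          rw [lintegral_add_right _ measurable_const, lintegral_const, hμu,
            lintegral_const_mul' _ _ (by simp)]
      _ ≤ 2 * (∫⁻ x, ‖G m x - cm m‖ₑ ^ 2 ∂μ) + (∫⁻ x, ‖G m x - cm m‖ₑ ^ 2 ∂μ) * 2 := by
          gcongr; exact hAm m
      _ = _ := by ring
  set H : ℝ → ℝ := fun x => (∑ m, ‖G m x - A m‖ ^ 2) ^ (1 / 2 : ℝ) with hH
  have hH0 : ∀ x, 0 ≤ H x := fun x => by positivity
  have hHsq : ∀ x, ‖H x‖ₑ ^ 2 = ∑ m, ‖G m x - A m‖ₑ ^ 2 := by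
    intro x
    rw [← ofReal_norm, Real.norm_of_nonneg (hH0 x), ← ENNReal.ofReal_pow (hH0 x), hH]
    dsimp only
    rw [← Real.sqrt_eq_rpow, Real.sq_sqrt (by positivity), ENNReal.ofReal_sum_of_nonneg (fun m _ => by positivity)]
    refine Finset.sum_congr rfl fun m _ => ?_
    rw [ENNReal.ofReal_pow (norm_nonneg _), ofReal_norm]
  have hHm : AEMeasurable H μ := by
    refine AEMeasurable.pow_const ?_ _
    exact Finset.aemeasurable_fun_sum _ fun m _ => (hms m).norm.aemeasurable.pow_const 2
  have c := aux_CS μ hHm.enorm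
  rw [hμu] at c
  simp only [hHsq] at c
  have fin : ‖∫ x, H x ∂μ‖ₑ ^ 2 ≤ ENNReal.ofReal (8 * D) := by
    calc _ ≤ (∫⁻ x, ‖H x‖ₑ ∂μ) ^ 2 := by
          gcongr; exact enorm_integral_le_lintegral_enorm _
      _ ≤ 2 * (4 * ENNReal.ofReal D) := c.trans (by gcongr)
      _ = _ := by
          rw [ENNReal.ofReal_mul (by norm_num), ENNReal.ofReal_ofNat, ← mul_assoc]; norm_num
  have hI0 : 0 ≤ ∫ x, H x ∂μ := integral_nonneg hH0
  rw [← ofReal_norm, Real.norm_of_nonneg hI0, ← ENNReal.ofReal_pow hI0,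
    ENNReal.ofReal_le_ofReal_iff (by positivity)] at fin
  exact fin

theorem aux_avscale {E : Type*} [NormedAddCommGroup E] [NormedSpace ℝ E] (h : ℝ → E) {x0 r : ℝ} (hr : 0 < r)
    (p q : ℝ) :
    ((x0 + r * q) - (x0 + r * p))⁻¹ • ∫ y in (x0 + r * p)..(x0 + r * q), h y =
      (q - p)⁻¹ • ∫ x in p..q, h (x0 + r * x) := by
  rw [intervalIntegral.integral_comp_add_mul h hr.ne', smul_smul]
  congr 1
  rw [← mul_inv]
  congr 1
  ring

theorem aux_locint {f : ℝ → ℂ} (hf : LocallyIntegrable f) {x0 r : ℝ} (hr : 0 < r) :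
    LocallyIntegrable (fun x => f (x0 + r * x)) := by
  intro x
  refine ⟨Icc (x - 1) (x + 1), Icc_mem_nhds (by linarith) (by linarith), ?_⟩
  have hF : Integrable ((Icc (x0 + r * (x - 1)) (x0 + r * (x + 1))).indicator f) :=
    (integrable_indicator_iff measurableSet_Icc).2 (hf.integrableOn_isCompact isCompact_Icc)
  have h2 := (hF.comp_add_left x0).comp_mul_left' hr.ne'
  refine (h2.integrableOn (s := Icc (x - 1) (x + 1))).congr_fun (fun y hy => ?_) measurableSet_Icc
  have : x0 + r * y ∈ Icc (x0 + r * (x - 1)) (x0 + r * (x + 1)) := by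
    constructor
    · have := hy.1; gcongr
    · have := hy.2; gcongr
  exact indicator_of_mem this f

theorem aux_rot_scale (φ : ℝ → ℂ) (a b : ℝ) (f : ℝ → ℂ) {x0 r : ℝ} (hr : 0 < r) (x : ℝ) :
    rotConv φ a b f (x0 + r * x) =
      e2pi (-(a * x0)) * rotConv φ (r * a) (r * b) (fun y => f (x0 + r * y)) x := by
  have h1 : conv f (phim φ a b) (x0 + r * x) =
      conv (fun y => f (x0 + r * y)) (phim φ (r * a) (r * b)) x := by
    simp only [conv]
    rw [← integral_add_left_eq_self _ x0]
    have h2 := Measure.integral_comp_mul_left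
      (fun t => f (x0 + t) * phim φ a b (x0 + r * x - (x0 + t))) r
    rw [abs_of_pos (inv_pos.2 hr)] at h2
    have h3 := congrArg (fun z => r • z) h2
    simp only [smul_smul, mul_inv_cancel₀ hr.ne', one_smul] at h3
    rw [← h3, ← integral_smul]
    congr with s
    rw [phim, phim, show a * (x0 + r * x - (x0 + r * s)) = r * a * (x - s) by ring,
      show (b - a) * (x0 + r * x - (x0 + r * s)) = (r * b - r * a) * (x - s) by ring,
      Complex.real_smul]
    push_cast
    ring
  rw [rotConv, rotConv, h1, show -(a * (x0 + r * x)) = -(a * x0) + -(r * a * x) by ring, aux_e2pi_add]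
  ring

theorem aux_adm_scale {N : ℕ} {a b : Fin N → ℝ} (h : Admissible a b) {r : ℝ} (hr : 0 < r) :
    Admissible (fun m => r * a m) (fun m => r * b m) := by
  refine ⟨fun m => mul_lt_mul_of_pos_left (h.1 m) hr, fun m hm => h.2.1 m ?_, fun m m' hne => ?_⟩
  · exact ⟨by have := hm.1; dsimp only at this; nlinarith, by have := hm.2; dsimp only at this; nlinarith⟩
  · rw [Set.disjoint_left]
    intro y hy hy'
    have hd := h.2.2 m m' hne
    rw [Set.disjoint_left] at hd
    refine @hd (y / r) ?_ ?_
    · exact ⟨(le_div_iff₀' hr).2 hy.1, (div_le_iff₀' hr).2 hy.2⟩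
    · exact ⟨(le_div_iff₀' hr).2 hy'.1, (div_le_iff₀' hr).2 hy'.2⟩

/-- uniform boundedness of the rotated family from `BMO` to `BMO(ℓ²)`
(i.e. on `Ḟ^0_{∞2}`): if the BMO seminorm of `f` is at most `K` (over all bounded intervals),
then the `ℓ²`-valued BMO seminorm of `{g_m}` is at most `C K`. -/
theorem statement7 (φ : SchwartzMap ℝ ℂ)
    (hφ : Function.support (𝓕 ⇑φ) ⊆ Set.Ioo 0 1) :
    ∃ C : ℝ, 0 < C ∧ ∀ (N : ℕ) (a b : Fin N → ℝ), Admissible a b →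
      ∀ (f : ℝ → ℂ), LocallyIntegrable f → ∀ K : ℝ,
        (∀ u v : ℝ, u < v →
          (v - u)⁻¹ * ∫ x in u..v, ‖f x - (v - u)⁻¹ • ∫ r in u..v, f r‖ ≤ K) →
        ∀ u v : ℝ, u < v →
          (v - u)⁻¹ * ∫ x in u..v,
              (∑ m : Fin N,
                ‖rotConv ⇑φ (a m) (b m) f x -
                  (v - u)⁻¹ • ∫ r in u..v, rotConv ⇑φ (a m) (b m) f r‖ ^ 2) ^ (1/2 : ℝ)
            ≤ C * K := by
  obtain ⟨C, hC, main⟩ := aux_main φ hφ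
  refine ⟨8 * (C + 1), by positivity, ?_⟩
  intro N a b hab f hf K hb u v huv
  have hK : 0 ≤ K := by
    refine le_trans ?_ (hb 0 1 one_pos)
    refine mul_nonneg (by norm_num) (intervalIntegral.integral_nonneg (by norm_num) fun x _ => norm_nonneg _)
  obtain ⟨x0, r, hr, rfl, rfl⟩ : ∃ x0 r : ℝ, 0 < r ∧ u = x0 + r * (-1) ∧ v = x0 + r * 1 :=
    ⟨(u + v) / 2, (v - u) / 2, by linarith, by ring, by ring⟩
  set ft : ℝ → ℂ := fun y => f (x0 + r * y) with hft
  have hbt : ∀ p q, p < q → (q - p)⁻¹ * ∫ y in p..q, ‖ft y - auxAv ft p q‖ ≤ K := by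
    intro p q hpq
    have h1 := hb (x0 + r * p) (x0 + r * q) (by gcongr)
    rw [aux_avscale f hr p q, ← smul_eq_mul, aux_avscale _ hr p q, smul_eq_mul] at h1
    exact h1
  obtain ⟨cm, hcm⟩ := main N _ _ (aux_adm_scale hab hr) ft (aux_locint hf hr) K hK hbt
  have fin := aux_avg (fun m => aux_rot_aesm φ (aux_locint hf hr).aestronglyMeasurable (r * a m) (r * b m))
    cm (by positivity) hcm
  rw [← smul_eq_mul, aux_avscale _ hr (-1) 1, smul_eq_mul]
  have e : ∀ x, (∑ m : Fin N, ‖rotConv φ (a m) (b m) f (x0 + r * x) -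
      ((x0 + r * 1) - (x0 + r * (-1)))⁻¹ • ∫ y in (x0 + r * (-1))..(x0 + r * 1),
        rotConv φ (a m) (b m) f y‖ ^ 2) =
      ∑ m : Fin N, ‖rotConv φ (r * a m) (r * b m) ft x -
        (2 : ℝ)⁻¹ • ∫ y in (-1 : ℝ)..1, rotConv φ (r * a m) (r * b m) ft y‖ ^ 2 := by
    intro x
    refine Finset.sum_congr rfl fun m _ => ?_
    rw [aux_avscale _ hr (-1) 1]
    simp only [aux_rot_scale φ (a m) (b m) f hr]
    rw [intervalIntegral.integral_const_mul, ← mul_smul_comm, ← mul_sub, norm_mul, aux_norm_e2pi,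
      one_mul, show (1 : ℝ) - -1 = 2 by norm_num]
  simp only [e]
  set I := ∫ x in (-1 : ℝ)..1, (∑ m, ‖rotConv φ (r * a m) (r * b m) ft x -
        (2 : ℝ)⁻¹ • ∫ y in (-1 : ℝ)..1, rotConv φ (r * a m) (r * b m) ft y‖ ^ 2) ^ (1 / 2 : ℝ) with hI
  have hI2 : I ≤ 8 * (C + 1) * K := by
    refine abs_le_of_sq_le_sq' ?_ (by positivity) |>.2
    refine fin.trans ?_
    nlinarith [mul_nonneg (sq_nonneg K) hC, mul_nonneg (sq_nonneg K) (sq_nonneg C), sq_nonneg K]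
  have hI0 : 0 ≤ 8 * (C + 1) * K := by positivity
  norm_num
  linarith
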